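/- arXiv:1003.4692 — 9 statements merged into one kernel-verified Lean document; each statement's English description precedes it below -/
import Mathlib

section
/- Let p > 0, q > 0 and let n ≥ 1 be an integer. Then for every k ≥ 1 the polynomial P_{k,n} has exactly k zeros, all of which are real, simple, and lie in the open interval (0,∞); moreover the zeros of consecutive polynomials interlace: if x_1^{k,n} < ... < x_k^{k,n} are the zeros of P_{k,n}, then x_j^{k+1,n} < x_j^{k,n} < x_{j+1}^{k+1,n} for j = 1, ..., k. -/
/-!
Put `α_k = k(k+pn+qn)/n²`, `β_k = k(k+pn+1)/n²`, `γ_k = (k+pn+1)(k+pn+qn+1)/n²`. The banded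
Hessenberg matrix of the recurrence factors into three bidiagonal matrices with these entries:
`b_k = α_k + β_k + γ_k`, `c_k = (α_k + β_k) γ_{k-1} + α_k β_{k-1}`, `d_k = α_k β_{k-1} γ_{k-2}`.
Hence, with `G` and `H` defined by `P_k = G_k + α_k G_{k-1}` and `G_k = H_k + β_k H_{k-1}`, one has
`X H_k = P_{k+1} + γ_k P_k` (`factored_recurrence`).

Let `a, b, c` be the zeros of `P_k, G_k, H_k`. The invariant, proved by induction on `k`, is
`0 < a_0 < b_0 < c_0 < a_1 < b_1 < c_1 < ⋯` (`Interlaced`). Since the `α, β, γ` are positive, the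
signs at the old zeros of the three relations
`P_{k+1} = X H_k - γ_k P_k`, `G_{k+1} = P_{k+1} - α_{k+1} G_k`, `H_{k+1} = G_{k+1} - β_{k+1} H_k`
place the new zeros `a', b', c'` successively: `a'_i ∈ (c_{i-1}, a_i)`, `b'_i ∈ (a'_i, b_i)` and
`c'_i ∈ (b'_i, c_i)`, where `c_{-1}` is read as `0` and the last interval is unbounded above
(`Interlaced.step`). This restores the invariant, and `a'_i < a_i < a'_{i+1}` is the interlacing of
the zeros of `P_k` and `P_{k+1}`.
-/

open Polynomial

/-- The recurrence coefficient `b_{k,n}` (with `α = p n`, `ν = q n`). -/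
noncomputable def bCoef (p q : ℝ) (k n : ℕ) : ℝ :=
  (((k : ℝ) + p * n + 1) * (3 * k + p * n + 2 * q * n) - (p * n + 1) * (q * n - 1)) / (n : ℝ) ^ 2

/-- The recurrence coefficient `c_{k,n}`. -/
noncomputable def cCoef (p q : ℝ) (k n : ℕ) : ℝ :=
  ((k : ℝ) * ((k : ℝ) + p * n) * ((k : ℝ) + p * n + q * n) * (3 * k + 2 * p * n + q * n)) /
    (n : ℝ) ^ 4

/-- The recurrence coefficient `d_{k,n}`. -/
noncomputable def dCoef (p q : ℝ) (k n : ℕ) : ℝ :=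
  ((k : ℝ) * ((k : ℝ) - 1) * ((k : ℝ) + p * n - 1) * ((k : ℝ) + p * n) *
      ((k : ℝ) + p * n + q * n - 1) * ((k : ℝ) + p * n + q * n)) / (n : ℝ) ^ 6

/-! ### Monic polynomials with prescribed real zeros -/

/-- The monic polynomial with zeros `u 0, …, u (n - 1)`; the other values of `u` are ignored. -/
noncomputable def rootProd (n : ℕ) (u : ℕ → ℝ) : ℝ[X] :=
  ∏ i ∈ Finset.range n, (X - C (u i))

lemma rootProd_monic (n : ℕ) (u : ℕ → ℝ) : (rootProd n u).Monic :=
  monic_prod_of_monic _ _ fun i _ => monic_X_sub_C (u i)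

lemma rootProd_natDegree (n : ℕ) (u : ℕ → ℝ) : (rootProd n u).natDegree = n := by
  simp [rootProd]

lemma rootProd_eval_root {n : ℕ} {u : ℕ → ℝ} {i : ℕ} (hi : i < n) :
    (rootProd n u).eval (u i) = 0 := by
  rw [rootProd, eval_prod]
  exact Finset.prod_eq_zero (Finset.mem_range.2 hi) (by simp)

/-- If exactly the first `m` of the `n` zeros lie to the left of `x`, then `rootProd n u` has sign
`(-1) ^ (n - m)` at `x`. -/
lemma rootProd_sign {n m : ℕ} (hmn : m ≤ n) {u : ℕ → ℝ} {x : ℝ} (hlt : ∀ j < m, u j < x)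
    (hgt : ∀ j, m ≤ j → j < n → x < u j) : 0 < (-1) ^ (n - m) * (rootProd n u).eval x := by
  induction n, hmn using Nat.le_induction with
  | base =>
    simp only [Nat.sub_self, pow_zero, one_mul, rootProd, eval_prod]
    refine Finset.prod_pos fun i hi => ?_
    simpa using hlt i (Finset.mem_range.1 hi)
  | succ n hmn ih =>
    have h1 := ih fun j h h' => hgt j h (by omega)
    have h2 := hgt n hmn (by omega)
    have h3 : (rootProd (n + 1) u).eval x = (rootProd n u).eval x * (x - u n) := by
      simp [rootProd, Finset.prod_range_succ]
    rw [h3, Nat.sub_add_comm hmn, pow_succ]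
    nlinarith [mul_pos h1 (sub_pos.2 h2)]

/-- A monic polynomial of degree `n` vanishing at `n` increasing points is their `rootProd`. -/
lemma eq_rootProd {n : ℕ} {g : ℝ[X]} (hg : g.Monic) (hd : g.natDegree = n) {r : ℕ → ℝ}
    (hr : ∀ i j, i < j → j < n → r i < r j) (h0 : ∀ i < n, g.eval (r i) = 0) :
    g = rootProd n r := by
  have hinj : Set.InjOn r (Finset.range n) := by
    intro i hi j hj hij
    simp only [Finset.coe_range, Set.mem_Iio] at hi hj
    rcases lt_trichotomy i j with h | h | h
    · exact absurd hij (hr i j h hj).ne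
    · exact h
    · exact absurd hij (hr j i h hi).ne'
  refine eq_of_degree_sub_lt_of_eval_finset_eq ((Finset.range n).image r) ?_ ?_
  · rw [Finset.card_image_of_injOn hinj, Finset.card_range]
    have hdeg : g.degree = (n : WithBot ℕ) := by
      rw [degree_eq_natDegree hg.ne_zero, hd]
    have hdeg' : (rootProd n r).degree = (n : WithBot ℕ) := by
      rw [degree_eq_natDegree (rootProd_monic n r).ne_zero, rootProd_natDegree]
    rw [← hdeg]
    exact degree_sub_lt_left (hdeg.trans hdeg'.symm) hg.ne_zero
      (by rw [hg.leadingCoeff, (rootProd_monic n r).leadingCoeff])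
  · intro x hx
    obtain ⟨i, hi, rfl⟩ := Finset.mem_image.1 hx
    have hi := Finset.mem_range.1 hi
    rw [h0 i hi, rootProd_eval_root hi]

/-- Location of zeros by sign changes: a monic polynomial of degree `k + 1` with a sign change in
each of the consecutive intervals `(lo i, hi i)`, `i < k`, and negative at `lo k` has one zero in
each of them and one in `(lo k, ∞)`, and these are all its zeros. -/
lemma exists_roots {k : ℕ} {g : ℝ[X]} (hg : g.Monic) (hd : g.natDegree = k + 1) {lo hi : ℕ → ℝ}
    (hlohi : ∀ i < k, lo i < hi i) (hhilo : ∀ i < k, hi i ≤ lo (i + 1))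
    (hlo : ∀ i ≤ k, (-1) ^ (k - i) * g.eval (lo i) < 0)
    (hhi : ∀ i < k, 0 < (-1) ^ (k - i) * g.eval (hi i)) :
    ∃ r : ℕ → ℝ, (∀ i ≤ k, lo i < r i) ∧ (∀ i < k, r i < hi i) ∧ g = rootProd (k + 1) r := by
  have key : ∀ i, ∃ x, i ≤ k → lo i < x ∧ (i < k → x < hi i) ∧ g.eval x = 0 := by
    intro i
    by_cases hik : i ≤ k
    swap
    · exact ⟨0, fun h => absurd h hik⟩
    obtain ⟨M, hM, hM1, hM2⟩ : ∃ M, lo i < M ∧ (i < k → M ≤ hi i) ∧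
        0 < (-1) ^ (k - i) * g.eval M := by
      rcases hik.lt_or_eq with h | rfl
      · exact ⟨hi i, hlohi i h, fun _ => le_rfl, hhi i h⟩
      · have ht := g.tendsto_atTop_of_leadingCoeff_nonneg
          (natDegree_pos_iff_degree_pos.1 (by omega)) (by simp [hg.leadingCoeff])
        obtain ⟨M, h1, h2⟩ :=
          ((Filter.eventually_gt_atTop (lo i)).and (ht.eventually_gt_atTop 0)).exists
        exact ⟨M, h1, fun h => absurd h (lt_irrefl _), by simpa using h2⟩
    have hc : ContinuousOn (fun x => (-1 : ℝ) ^ (k - i) * g.eval x) (Set.Icc (lo i) M) := by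
      fun_prop
    obtain ⟨x, hx, hx0⟩ := intermediate_value_Ioo hM.le hc ⟨hlo i hik, hM2⟩
    refine ⟨x, fun _ => ⟨hx.1, fun h => hx.2.trans_le (hM1 h), ?_⟩⟩
    simpa using hx0
  choose r hr using key
  have hstep : ∀ i j, i < j → j < k + 1 → r i < r j := by
    intro i j hij
    induction j, hij using Nat.le_induction with
    | base =>
      intro h
      exact ((hr i (by omega)).2.1 (by omega)).trans
        ((hhilo i (by omega)).trans_lt (hr (i + 1) (by omega)).1)
    | succ j hj ih =>
      intro h
      exact (ih (by omega)).trans (((hr j (by omega)).2.1 (by omega)).trans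
        ((hhilo j (by omega)).trans_lt (hr (j + 1) (by omega)).1))
  exact ⟨r, fun i h => (hr i h).1, fun i h => (hr i h.le).2.1 h,
    eq_rootProd hg hd hstep fun i h => (hr i (by omega)).2.2⟩

lemma sub_C_mul_rootProd {k : ℕ} {f : ℝ[X]} (hf : f.Monic) (hd : f.natDegree = k + 1) (t : ℝ)
    (u : ℕ → ℝ) :
    (f - C t * rootProd k u).Monic ∧ (f - C t * rootProd k u).natDegree = k + 1 := by
  have h1 : (C t * rootProd k u).natDegree < f.natDegree := by
    have := natDegree_C_mul_le t (rootProd k u)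
    rw [rootProd_natDegree] at this
    omega
  exact ⟨hf.sub_of_left (degree_lt_degree h1),
    (natDegree_sub_eq_left_of_natDegree_lt h1).trans hd⟩

/-! ### The interlacing invariant -/

/-- `F, G, H` are monic of degree `k` and their zeros `a, b, c` (indexed by `i < k`) are positive
and satisfy `a 0 < b 0 < c 0 < a 1 < b 1 < c 1 < ⋯`. -/
structure Interlaced (k : ℕ) (F G H : ℝ[X]) (a b c : ℕ → ℝ) : Prop where
  hF : F = rootProd k a
  hG : G = rootProd k b
  hH : H = rootProd k c
  pos : ∀ i < k, 0 < a i
  ab : ∀ i < k, a i < b i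
  bc : ∀ i < k, b i < c i
  ca : ∀ j i, j < i → i < k → c j < a i

namespace Interlaced

variable {k : ℕ} {F G H : ℝ[X]} {a b c : ℕ → ℝ}

lemma a_mono (h : Interlaced k F G H a b c) {i j : ℕ} (hij : i ≤ j) (hj : j < k) : a i ≤ a j := by
  rcases hij.eq_or_lt with rfl | hlt
  · exact le_rfl
  · linarith [h.ab i (by omega), h.bc i (by omega), h.ca i j hlt hj]

lemma b_mono (h : Interlaced k F G H a b c) {i j : ℕ} (hij : i ≤ j) (hj : j < k) : b i ≤ b j := by
  rcases hij.eq_or_lt with rfl | hlt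
  · exact le_rfl
  · linarith [h.ab j hj, h.bc i (by omega), h.ca i j hlt hj]

lemma c_mono (h : Interlaced k F G H a b c) {i j : ℕ} (hij : i ≤ j) (hj : j < k) : c i ≤ c j := by
  rcases hij.eq_or_lt with rfl | hlt
  · exact le_rfl
  · linarith [h.ab j hj, h.bc j hj, h.ca i j hlt hj]

/-- The zeros of `X H - γ F` lie in `(0, a 0), (c 0, a 1), …, (c (k - 1), ∞)`. -/
lemma exists_next_a (h : Interlaced k F G H a b c) {γ : ℝ} (hγ : 0 < γ) :
    ∃ a' : ℕ → ℝ, (∀ i ≤ k, 0 < a' i) ∧ (∀ j i, j < i → i ≤ k → c j < a' i) ∧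
      (∀ i < k, a' i < a i) ∧ X * H - C γ * F = rootProd (k + 1) a' := by
  have hmd : (X * H - C γ * F).Monic ∧ (X * H - C γ * F).natDegree = k + 1 := by
    rw [h.hF]
    refine sub_C_mul_rootProd ?_ ?_ γ a
    · rw [h.hH]
      exact monic_X.mul (rootProd_monic k c)
    · rw [h.hH, natDegree_X_mul (rootProd_monic k c).ne_zero, rootProd_natDegree]
  have hex : ∃ r : ℕ → ℝ, (∀ i ≤ k, (if i = 0 then 0 else c (i - 1)) < r i) ∧
      (∀ i < k, r i < a i) ∧ X * H - C γ * F = rootProd (k + 1) r := by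
    refine exists_roots (lo := fun i => if i = 0 then 0 else c (i - 1)) hmd.1 hmd.2 ?_ ?_ ?_ ?_
    · intro i hi
      rcases Nat.eq_zero_or_pos i with rfl | hpos
      · simpa using h.pos 0 hi
      · simpa [hpos.ne'] using h.ca (i - 1) i (by omega) hi
    · intro i hi
      simpa using ((h.ab i hi).trans (h.bc i hi)).le
    -- At `0` only the term `-γ F` survives because of the factor `X`; at `c i` because `H` vanishes.
    · rintro (_ | i) hi
      · have hs := rootProd_sign (Nat.zero_le k) (u := a) (x := 0) (by simp)
          fun j _ hj => h.pos j hj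
        rw [h.hF]
        simp only [if_true, eval_sub, eval_mul, eval_X, eval_C]
        nlinarith [mul_pos hγ hs]
      · have hs := rootProd_sign (m := i + 1) (n := k) hi (u := a) (x := c i)
          (fun j hj => by
            linarith [h.a_mono (show j ≤ i by omega) (by omega), h.ab i (by omega),
              h.bc i (by omega)])
          fun j h1 h2 => h.ca i j h1 h2
        have h0 : H.eval (c i) = 0 := by rw [h.hH]; exact rootProd_eval_root (by omega)
        rw [h.hF]
        simp only [Nat.add_sub_cancel, Nat.succ_ne_zero, if_false, eval_sub, eval_mul, eval_X,
          eval_C, h0]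
        nlinarith [mul_pos hγ hs]
    · intro i hi
      have hs := rootProd_sign hi.le (u := c) (x := a i) (fun j hj => h.ca j i hj hi)
        fun j h1 h2 => by linarith [h.a_mono h1 h2, h.ab j h2, h.bc j h2]
      have h0 : F.eval (a i) = 0 := by rw [h.hF]; exact rootProd_eval_root hi
      rw [h.hH]
      simp only [eval_sub, eval_mul, eval_X, eval_C, h0]
      nlinarith [mul_pos (h.pos i hi) hs]
  obtain ⟨a', hlo, hhi, heq⟩ := hex
  have hc : ∀ j i, j < i → i ≤ k → c j < a' i := by
    intro j i hji hik
    have := hlo i hik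
    rw [if_neg (by omega)] at this
    exact (h.c_mono (by omega) (by omega)).trans_lt this
  refine ⟨a', fun i hi => ?_, hc, hhi, heq⟩
  rcases Nat.eq_zero_or_pos i with rfl | hpos
  · simpa using hlo 0 hi
  · have := hc 0 i hpos hi
    linarith [h.pos 0 (by omega), h.ab 0 (by omega), h.bc 0 (by omega)]

end Interlaced

/-- If `v' 0 < v 0 < v' 1 < v 1 < ⋯ < v' k` and `t > 0`, then the zeros of
`rootProd (k + 1) v' - t * rootProd k v` lie in `(v' i, v i)` for `i < k` and in `(v' k, ∞)`. -/
lemma exists_next {k : ℕ} {v v' : ℕ → ℝ} {t : ℝ} (ht : 0 < t)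
    (h1 : ∀ j i, j < i → i ≤ k → v j < v' i) (h2 : ∀ i j, i ≤ j → j < k → v' i < v j) :
    ∃ w : ℕ → ℝ, (∀ i ≤ k, v' i < w i) ∧ (∀ i < k, w i < v i) ∧
      rootProd (k + 1) v' - C t * rootProd k v = rootProd (k + 1) w := by
  have hmd := sub_C_mul_rootProd (rootProd_monic (k + 1) v') (rootProd_natDegree _ _) t v
  refine exists_roots hmd.1 hmd.2 (fun i hi => h2 i i le_rfl hi)
    (fun i hi => (h1 i (i + 1) (by omega) (by omega)).le) ?_ ?_
  · intro i hi
    have hs := rootProd_sign hi (u := v) (x := v' i) (fun j hj => h1 j i hj hi)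
      fun j hj hj' => h2 i j hj hj'
    have h0 : (rootProd (k + 1) v').eval (v' i) = 0 := rootProd_eval_root (by omega)
    simp only [eval_sub, eval_mul, eval_C, h0]
    nlinarith [mul_pos ht hs]
  · intro i hi
    have hs := rootProd_sign (n := k + 1) (m := i + 1) (by omega) (u := v') (x := v i)
      (fun j hj => h2 j i (by omega) hi) fun j hj hj' => h1 i j hj (by omega)
    have h0 : (rootProd k v).eval (v i) = 0 := rootProd_eval_root hi
    rw [Nat.add_sub_add_right] at hs
    simpa only [eval_sub, eval_mul, eval_C, h0, mul_zero, sub_zero] using hs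

/-- One step of the induction: the invariant passes to degree `k + 1`, and the old and new zeros of
the first family interlace. -/
lemma Interlaced.step {k : ℕ} {F G H F' G' H' : ℝ[X]} {a b c : ℕ → ℝ}
    (h : Interlaced k F G H a b c) {α β γ : ℝ} (hα : 0 < α) (hβ : 0 < β) (hγ : 0 < γ)
    (hF' : F' = X * H - C γ * F) (hG' : G' = F' - C α * G) (hH' : H' = G' - C β * H) :
    ∃ a' b' c' : ℕ → ℝ, Interlaced (k + 1) F' G' H' a' b' c' ∧
      ∀ i < k, a' i < a i ∧ a i < a' (i + 1) := by
  obtain ⟨a', hpos, hca', ha'a, hF''⟩ := h.exists_next_a hγ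
  rw [← hF'] at hF''
  obtain ⟨b', hab', hb'b, hG''⟩ := exists_next (k := k) (v := b) (v' := a') hα
    (fun j i hji hi => (h.bc j (by omega)).trans (hca' j i hji hi))
    (fun i j hij hj => by
      linarith [ha'a i (by omega), h.a_mono hij hj, h.ab j hj])
  rw [← hF'', ← h.hG, ← hG'] at hG''
  obtain ⟨c', hbc', hc'c, hH''⟩ := exists_next (k := k) (v := c) (v' := b') hβ
    (fun j i hji hi => (hca' j i hji hi).trans (hab' i hi))
    (fun i j hij hj => by
      linarith [hb'b i (by omega), h.b_mono hij hj, h.bc j hj])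
  rw [← hG'', ← h.hH, ← hH'] at hH''
  refine ⟨a', b', c', ⟨hF'', hG'', hH'', fun i hi => hpos i (by omega),
    fun i hi => hab' i (by omega), fun i hi => hbc' i (by omega), fun j i hji hi =>
    (hc'c j (by omega)).trans (hca' j i hji (by omega))⟩, fun i hi => ⟨ha'a i hi, ?_⟩⟩
  linarith [h.ab i hi, h.bc i hi, hca' i (i + 1) (by omega) (by omega)]

/-! ### Bidiagonal factorization of the recurrence -/

/-- The sequence `Q` determined by `Q 0 = 1` and `P k = Q k + t k * Q (k - 1)` for `k ≥ 1`, i.e.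
the result of removing from `P` a bidiagonal factor with subdiagonal `t`. -/
noncomputable def peel (P : ℕ → ℝ[X]) (t : ℕ → ℝ) : ℕ → ℝ[X]
  | 0 => 1
  | k + 1 => P (k + 1) - C (t (k + 1)) * peel P t k

/-- Subdiagonal of the first bidiagonal factor. -/
noncomputable def alphaCoef (p q : ℝ) (n k : ℕ) : ℝ :=
  (k : ℝ) * (k + p * n + q * n) / (n : ℝ) ^ 2

/-- Subdiagonal of the second bidiagonal factor. -/
noncomputable def betaCoef (p : ℝ) (n k : ℕ) : ℝ :=
  (k : ℝ) * (k + p * n + 1) / (n : ℝ) ^ 2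

/-- Diagonal of the third bidiagonal factor. -/
noncomputable def gammaCoef (p q : ℝ) (n k : ℕ) : ℝ :=
  ((k : ℝ) + p * n + 1) * (k + p * n + q * n + 1) / (n : ℝ) ^ 2

/-- The four-term recurrence in factored form. -/
lemma factored_recurrence {p q : ℝ} {n : ℕ} (hn : 1 ≤ n) {P : ℕ → ℝ[X]} (hP0 : P 0 = 1)
    (hPrec : ∀ k : ℕ,
      P (k + 1) = (X - C (bCoef p q k n)) * P k - C (cCoef p q k n) * P (k - 1)
        - C (dCoef p q k n) * P (k - 2)) (k : ℕ) :
    P (k + 1) = X * peel (peel P (alphaCoef p q n)) (betaCoef p n) k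
      - C (gammaCoef p q n k) * P k := by
  have hn0 : (n : ℝ) ≠ 0 := by positivity
  induction k using Nat.strong_induction_on with
  | _ k ih =>
    match k, ih with
    | 0, _ =>
      have hb : bCoef p q 0 n = gammaCoef p q n 0 := by
        simp only [bCoef, gammaCoef]; push_cast; ring
      have hc : cCoef p q 0 n = 0 := by simp [cCoef]
      have hd : dCoef p q 0 n = 0 := by simp [dCoef]
      rw [hPrec 0, hb, hc, hd]
      simp [peel, hP0]
    | 1, ih =>
      have hb : bCoef p q 1 n = alphaCoef p q n 1 + betaCoef p n 1 + gammaCoef p q n 1 := by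
        simp only [bCoef, alphaCoef, betaCoef, gammaCoef]; push_cast; ring
      have hc : cCoef p q 1 n = (alphaCoef p q n 1 + betaCoef p n 1) * gammaCoef p q n 0 := by
        simp only [cCoef, alphaCoef, betaCoef, gammaCoef]; push_cast; field_simp; ring
      have hd : dCoef p q 1 n = 0 := by simp [dCoef]
      have h0 := ih 0 (by omega)
      rw [hPrec 1, hb, hc, hd]
      simp only [peel, hP0, C_add, C_mul, C_0, zero_add, Nat.sub_self] at h0 ⊢
      linear_combination -(C (alphaCoef p q n 1) + C (betaCoef p n 1)) * h0
    | k + 2, ih =>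
      have hb : bCoef p q (k + 2) n
          = alphaCoef p q n (k + 2) + betaCoef p n (k + 2) + gammaCoef p q n (k + 2) := by
        simp only [bCoef, alphaCoef, betaCoef, gammaCoef]; push_cast; ring
      have hc : cCoef p q (k + 2) n
          = (alphaCoef p q n (k + 2) + betaCoef p n (k + 2)) * gammaCoef p q n (k + 1)
            + alphaCoef p q n (k + 2) * betaCoef p n (k + 1) := by
        simp only [cCoef, alphaCoef, betaCoef, gammaCoef]; push_cast; field_simp; ring
      have hd : dCoef p q (k + 2) n
          = alphaCoef p q n (k + 2) * betaCoef p n (k + 1) * gammaCoef p q n k := by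
        simp only [dCoef, alphaCoef, betaCoef, gammaCoef]; push_cast; field_simp; ring
      have h0 := ih k (by omega)
      have h1 := ih (k + 1) (by omega)
      rw [hPrec (k + 2), hb, hc, hd]
      simp only [peel, C_add, C_mul, Nat.add_sub_cancel, show k + 2 - 1 = k + 1 by omega,
        show k + 1 + 1 = k + 2 by omega] at h0 h1 ⊢
      linear_combination -(C (alphaCoef p q n (k + 2)) + C (betaCoef p n (k + 2))) * h1
        - C (alphaCoef p q n (k + 2)) * C (betaCoef p n (k + 1)) * h0

/-! ### Zeros of all degrees -/

/-- Dependent choice for a transition relation `T` preserving an invariant `Q`. -/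
lemma exists_chain {S : Type*} {Q : ℕ → S → Prop} {T : ℕ → S → S → Prop} {s₀ : S} (h0 : Q 0 s₀)
    (hs : ∀ k s, Q k s → ∃ s', Q (k + 1) s' ∧ T k s s') :
    ∃ s : ℕ → S, (∀ k, Q k (s k)) ∧ ∀ k, T k (s k) (s (k + 1)) := by
  choose f hf hT using hs
  let g : (k : ℕ) → {s // Q k s} := fun k =>
    Nat.rec ⟨s₀, h0⟩ (fun k s => ⟨f k s.1 s.2, hf k s.1 s.2⟩) k
  exact ⟨fun k => (g k).1, fun k => (g k).2, fun k => hT k (g k).1 (g k).2⟩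

/-- for `p, q > 0` and `n ≥ 1`, the polynomials `P_{k,n}` generated by the
four-term recurrence have, for every `k ≥ 1`, exactly `k` zeros, all real, simple and
in `(0,∞)`, and the zeros of consecutive polynomials interlace. -/
theorem zeros_real_simple_positive_interlacing
    (p q : ℝ) (hp : 0 < p) (hq : 0 < q) (n : ℕ) (hn : 1 ≤ n)
    (P : ℕ → Polynomial ℝ)
    (hP0 : P 0 = 1)
    (hPrec : ∀ k : ℕ,
      P (k + 1) = (X - C (bCoef p q k n)) * P k - C (cCoef p q k n) * P (k - 1)
        - C (dCoef p q k n) * P (k - 2)) :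
    ∃ x : (k : ℕ) → Fin k → ℝ,
      (∀ k : ℕ, 1 ≤ k →
        StrictMono (x k) ∧ (∀ j : Fin k, 0 < x k j) ∧
          (P k).roots = Multiset.map (x k) Finset.univ.val) ∧
      (∀ k : ℕ, 1 ≤ k → ∀ j : Fin k,
        x (k + 1) j.castSucc < x k j ∧ x k j < x (k + 1) j.succ) := by
  have hn' : (0 : ℝ) < n := by exact_mod_cast hn
  have hα : ∀ k, 0 < alphaCoef p q n (k + 1) := fun k => by
    unfold alphaCoef; positivity
  have hβ : ∀ k, 0 < betaCoef p n (k + 1) := fun k => by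
    unfold betaCoef; positivity
  have hγ : ∀ k, 0 < gammaCoef p q n k := fun k => by
    unfold gammaCoef; positivity
  set G := peel P (alphaCoef p q n) with hG
  set H := peel G (betaCoef p n) with hH
  obtain ⟨s, hs, hT⟩ := exists_chain (S := (ℕ → ℝ) × (ℕ → ℝ) × (ℕ → ℝ))
    (Q := fun k s => Interlaced k (P k) (G k) (H k) s.1 s.2.1 s.2.2)
    (T := fun k s s' => ∀ i < k, s'.1 i < s.1 i ∧ s.1 i < s'.1 (i + 1))
    (s₀ := (0, 0, 0))
    (by constructor <;> simp [rootProd, hP0, hG, hH, peel])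
    (by
      rintro k ⟨a, b, c⟩ hk
      obtain ⟨a', b', c', h1, h2⟩ := hk.step (hα k) (hβ k) (hγ k)
        (factored_recurrence hn hP0 hPrec k) (G' := G (k + 1)) rfl (H' := H (k + 1)) rfl
      exact ⟨(a', b', c'), h1, h2⟩)
  refine ⟨fun k j => (s k).1 j, fun k _ => ⟨fun i j hij => ?_, fun j => (hs k).pos j j.2, ?_⟩,
    fun k _ j => ?_⟩
  · have h := hs k
    linarith [h.ab i i.2, h.bc i i.2, h.ca i j hij j.2]
  · have h := roots_multiset_prod_X_sub_C
      (Multiset.map (fun j : Fin k => (s k).1 j) Finset.univ.val)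
    rw [Multiset.map_map] at h
    rw [(hs k).hF, rootProd, Finset.prod_range]
    exact h
  · simpa using hT k j j.2
end

section
/- Let p > 0, q > 0 and s > 0. Then the cubic z³ − c(s)z − 2d(s) (whose roots are exactly the zeros of A_s'(z) = 1 − c(s)z⁻² − 2d(s)z⁻³) has three distinct real roots y₁(s) < y₂(s) < y₃(s), and they satisfy y₁(s) < y₂(s) < 0 < y₃(s). -/
/-!
With `u = s`, `v = s + p`, `w = s + p + q`, `P = uvw` and `σ = u + v + w`, the cubic is
`f(z) = z³ - Pσ z - 2P²`. The strict AM-GM inequality `27 P < σ³` (the numbers `u < v < w` are not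
all equal) says that its discriminant is positive. Concretely, `f` is positive at the negative
point `-3P/σ`, where `f(-3P/σ) = P² (1 - 27P/σ³)`, while `f(0) < 0` and `f` is negative far to the
left. The intermediate value theorem thus yields two negative roots. As the `z²` coefficient
vanishes, the third root is minus their sum, hence positive.
-/

open Filter Topology Set

/-- `b(s) = 3s² + 4sp + 2sq + p² + pq`. -/
noncomputable def bS (p q s : ℝ) : ℝ := 3 * s ^ 2 + 4 * s * p + 2 * s * q + p ^ 2 + p * q

/-- `c(s) = s(s+p)(s+p+q)(3s+2p+q)`. -/
noncomputable def cS (p q s : ℝ) : ℝ := s * (s + p) * (s + p + q) * (3 * s + 2 * p + q)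

/-- `d(s) = s²(s+p)²(s+p+q)²`. -/
noncomputable def dS (p q s : ℝ) : ℝ := s ^ 2 * (s + p) ^ 2 * (s + p + q) ^ 2

/-- The symbol `A_s(z) = z + b(s) + c(s)z⁻¹ + d(s)z⁻²` for complex `z ≠ 0`. -/
noncomputable def Asymb (p q s : ℝ) (z : ℂ) : ℂ :=
  z + (bS p q s : ℂ) + (cS p q s : ℂ) * z⁻¹ + (dS p q s : ℂ) * (z ^ 2)⁻¹

/-- The symbol `A_s` restricted to real arguments. -/
noncomputable def AsymbR (p q s y : ℝ) : ℝ :=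
  y + bS p q s + cS p q s / y + dS p q s / y ^ 2

/-- The cubic `Q_{s,x}(z) = z³ + (b(s) − x)z² + c(s)z + d(s)`, whose roots are the
solutions of `A_s(z) = x`. -/
noncomputable def Qcubic (p q s : ℝ) (x z : ℂ) : ℂ :=
  z ^ 3 + ((bS p q s : ℂ) - x) * z ^ 2 + (cS p q s : ℂ) * z + (dS p q s : ℂ)

/-- A depressed cubic with negative constant term that is positive at some `w < 0` has two negative
roots and one positive root. -/
lemma depressed_cubic_roots (c d w : ℝ) (hc : 0 < c) (hd : 0 < d) (hw : w < 0)
    (hfw : 0 < w ^ 3 - c * w - 2 * d) :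
    ∃ y₁ y₂ y₃ : ℝ, y₁ < y₂ ∧ y₂ < 0 ∧ 0 < y₃ ∧
      ∀ z : ℝ, z ^ 3 - c * z - 2 * d = (z - y₁) * (z - y₂) * (z - y₃) := by
  have hcont : Continuous fun z : ℝ => z ^ 3 - c * z - 2 * d := by fun_prop
  -- The point `-M` lies to the left of `w`, and `M ^ 2 > c` makes the cubic negative there.
  obtain ⟨M, hM⟩ : ∃ M, M = c + 1 - w := ⟨_, rfl⟩
  have hMsq : c < M ^ 2 := by nlinarith
  have hfM : (-M) ^ 3 - c * (-M) - 2 * d < 0 := by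
    have : 0 < M * (M ^ 2 - c) := mul_pos (by linarith) (by linarith)
    linarith [show (-M) ^ 3 - c * (-M) = -(M * (M ^ 2 - c)) by ring]
  obtain ⟨y₁, ⟨-, h1w⟩, h1⟩ := intermediate_value_Ioo (show -M ≤ w by linarith)
    hcont.continuousOn (show (0 : ℝ) ∈ Ioo _ _ from ⟨hfM, hfw⟩)
  obtain ⟨y₂, ⟨h2w, h20⟩, h2⟩ := intermediate_value_Ioo' hw.le
    hcont.continuousOn (show (0 : ℝ) ∈ Ioo _ _ from ⟨by norm_num; exact hd, hfw⟩)
  simp only at h1 h2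
  have h12 : y₁ < y₂ := h1w.trans h2w
  have hcy : y₁ ^ 2 + y₁ * y₂ + y₂ ^ 2 = c := by
    apply mul_left_cancel₀ (sub_ne_zero.mpr h12.ne)
    linear_combination h1 - h2
  refine ⟨y₁, y₂, -(y₁ + y₂), h12, h20, by linarith, fun z => ?_⟩
  linear_combination h1 + (z - y₁) * hcy

/-- The strict AM-GM inequality for the three numbers `s < s + p < s + p + q`. -/
lemma amgm_shifted (p q s : ℝ) (hp : 0 < p) (hq : 0 < q) (hs : 0 < s) :
    27 * (s * (s + p) * (s + p + q)) < (3 * s + 2 * p + q) ^ 3 := by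
  -- Sum-of-squares form of `σ³ - 27P`, written through the differences `p`, `q`, `p + q`.
  have key : (3 * s + 2 * p + q) ^ 3 - 27 * (s * (s + p) * (s + p + q)) =
      (3 * s + 2 * p + q) * (p ^ 2 + q ^ 2 + (p + q) ^ 2) / 2 +
        3 * (s * q ^ 2 + (s + p) * (p + q) ^ 2 + (s + p + q) * p ^ 2) := by ring
  have : 0 < (3 * s + 2 * p + q) * (p ^ 2 + q ^ 2 + (p + q) ^ 2) / 2 +
        3 * (s * q ^ 2 + (s + p) * (p + q) ^ 2 + (s + p + q) * p ^ 2) := by positivity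
  linarith

/-- the cubic `z³ − c(s)z − 2d(s)`, whose roots are exactly the zeros of
`A_s'(z) = 1 − c(s)z⁻² − 2d(s)z⁻³`, has three distinct real roots
`y₁(s) < y₂(s) < 0 < y₃(s)`. -/
theorem critical_points_cubic_roots
    (p q s : ℝ) (hp : 0 < p) (hq : 0 < q) (hs : 0 < s) :
    (∀ z : ℂ, z ≠ 0 →
        (z ^ 3 - (cS p q s : ℂ) * z - 2 * (dS p q s : ℂ) = 0 ↔
          1 - (cS p q s : ℂ) * (z ^ 2)⁻¹ - 2 * (dS p q s : ℂ) * (z ^ 3)⁻¹ = 0)) ∧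
      ∃ y₁ y₂ y₃ : ℝ, y₁ < y₂ ∧ y₂ < 0 ∧ 0 < y₃ ∧
        ∀ z : ℝ, z ^ 3 - cS p q s * z - 2 * dS p q s = (z - y₁) * (z - y₂) * (z - y₃) := by
  constructor
  · intro z hz
    have h : 1 - (cS p q s : ℂ) * (z ^ 2)⁻¹ - 2 * (dS p q s : ℂ) * (z ^ 3)⁻¹ =
        (z ^ 3 - (cS p q s : ℂ) * z - 2 * (dS p q s : ℂ)) / z ^ 3 := by
      field_simp
    rw [h, div_eq_zero_iff, or_iff_left (pow_ne_zero 3 hz)]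
  · have hamgm := amgm_shifted p q s hp hq hs
    obtain ⟨P, hP⟩ : ∃ P, P = s * (s + p) * (s + p + q) := ⟨_, rfl⟩
    obtain ⟨σ, hσ⟩ : ∃ σ, σ = 3 * s + 2 * p + q := ⟨_, rfl⟩
    have hP0 : 0 < P := by rw [hP]; positivity
    have hσ0 : 0 < σ := by rw [hσ]; positivity
    rw [← hP, ← hσ] at hamgm
    have hc : cS p q s = P * σ := by rw [cS, hP, hσ]
    have hd : dS p q s = P ^ 2 := by rw [dS, hP]; ring
    rw [hc, hd]
    -- The test point `-3d/c`, which is the double root when the discriminant vanishes.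
    refine depressed_cubic_roots _ _ (-(3 * P / σ)) (by positivity) (by positivity)
      (neg_lt_zero.mpr (by positivity)) ?_
    have h : (-(3 * P / σ)) ^ 3 - P * σ * (-(3 * P / σ)) - 2 * P ^ 2 =
        P ^ 2 * (σ ^ 3 - 27 * P) / σ ^ 3 := by
      field_simp
      ring
    rw [h]
    have := sub_pos.mpr hamgm
    positivity
end

section
/- Let p > 0, q > 0 and s > 0. Then the three critical values of A_s satisfy η(s) < 0 < β(s) < γ(s). -/
/-!
Put `u = s < v = s + p < w = s + p + q`. Then `b`, `c`, `d` are `e₂`, `e₁e₃`, `e₃²` in the elementary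
symmetric functions of `u, v, w`, so `y² A_s(y) = (y + uv)(y + uw)(y + vw)`
(`AsymbR_eq_factored`). At a zero `-ρ` of this product the cubic `z³ - cz - 2d`, which is
`z³ A_s'(z)`, also factors (`cubic_at_neg_vw` and its companions), and its sign there forces
`-vw < y₁ < -uw < y₂ < -uv`. The signs of `A_s(y₁)` and `A_s(y₂)` follow from the factorization.

For `β < γ`: at a critical point `A_s(y) = 2y + b - d/y²` (`AsymbR_critical`), and since the cubic has
no quadratic term, `y₃ = |y₁| + |y₂| > |y₁|`, so both `2y` and `-d/y²` are larger at `y₃`.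
-/

open Filter Topology Set

lemma AsymbR_eq_factored (p q s y : ℝ) (hy : y ≠ 0) :
    AsymbR p q s y =
      (y + s * (s + p)) * (y + s * (s + p + q)) * (y + (s + p) * (s + p + q)) / y ^ 2 := by
  unfold AsymbR bS cS dS
  field_simp
  ring

lemma AsymbR_critical (p q s y : ℝ) (hy : y ≠ 0)
    (h : y ^ 3 - cS p q s * y - 2 * dS p q s = 0) :
    AsymbR p q s y = 2 * y + bS p q s - dS p q s / y ^ 2 := by
  unfold AsymbR
  field_simp
  linear_combination -h

lemma cubic_at_neg_uv (p q s : ℝ) :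
    (-(s * (s + p))) ^ 3 - cS p q s * (-(s * (s + p))) - 2 * dS p q s
      = -(s * (s + p) * (s * q) * ((s + p) * (p + q))) := by
  unfold cS dS
  ring

lemma cubic_at_neg_uw (p q s : ℝ) :
    (-(s * (s + p + q))) ^ 3 - cS p q s * (-(s * (s + p + q))) - 2 * dS p q s
      = s * (s + p + q) * (s * q) * ((s + p + q) * p) := by
  unfold cS dS
  ring

lemma cubic_at_neg_vw (p q s : ℝ) :
    (-((s + p) * (s + p + q))) ^ 3 - cS p q s * (-((s + p) * (s + p + q))) - 2 * dS p q s
      = -((s + p) * (s + p + q) * ((s + p) * (p + q)) * ((s + p + q) * p)) := by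
  unfold cS dS
  ring

/-- the three critical values of `A_s` satisfy `η(s) < 0 < β(s) < γ(s)`,
where `β(s) = A_s(y₁(s))`, `η(s) = A_s(y₂(s))`, `γ(s) = A_s(y₃(s))` and
`y₁(s) < y₂(s) < 0 < y₃(s)` are the real roots of `z³ − c(s)z − 2d(s)`. -/
theorem critical_values_ordering
    (p q s : ℝ) (hp : 0 < p) (hq : 0 < q) (hs : 0 < s)
    (y₁ y₂ y₃ : ℝ) (h12 : y₁ < y₂) (h20 : y₂ < 0) (h03 : 0 < y₃)
    (hroots : ∀ z : ℝ,
      z ^ 3 - cS p q s * z - 2 * dS p q s = (z - y₁) * (z - y₂) * (z - y₃)) :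
    AsymbR p q s y₂ < 0 ∧ 0 < AsymbR p q s y₁ ∧ AsymbR p q s y₁ < AsymbR p q s y₃ := by
  have hd : 0 < dS p q s := by unfold dS; positivity
  -- Comparing the coefficients of `z²` through the values at `1`, `-1` and `0`.
  have hsum : y₁ + y₂ + y₃ = 0 := by
    linear_combination (1 / 2) * hroots 1 + (1 / 2) * hroots (-1) - hroots 0
  have huv : 0 < s * (s + p) := by positivity
  have huw : 0 < s * (s + p + q) := by positivity
  have hvw : 0 < (s + p) * (s + p + q) := by positivity
  have hlt₁ : s * (s + p) < s * (s + p + q) := by nlinarith [mul_pos hs hq]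
  have hlt₂ : s * (s + p + q) < (s + p) * (s + p + q) := by
    nlinarith [mul_pos hp (show 0 < s + p + q by positivity)]
  have e₁ := (hroots _).symm.trans (cubic_at_neg_uv p q s)
  have e₂ := (hroots _).symm.trans (cubic_at_neg_uw p q s)
  have e₃ := (hroots _).symm.trans (cubic_at_neg_vw p q s)
  have n₁ : 0 < s * (s + p) * (s * q) * ((s + p) * (p + q)) := by positivity
  have n₂ : 0 < s * (s + p + q) * (s * q) * ((s + p + q) * p) := by positivity
  have n₃ : 0 < (s + p) * (s + p + q) * ((s + p) * (p + q)) * ((s + p + q) * p) := by positivity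
  -- Sign of the cubic at a negative point `t`, where `t - y₃ < 0`.
  have sgn : ∀ t : ℝ, t < 0 → 0 < (t - y₁) * (t - y₂) * (t - y₃) → (t - y₁) * (t - y₂) < 0 :=
    fun t ht h => by
      by_contra! hc
      exact absurd h (not_lt.mpr (mul_nonpos_of_nonneg_of_nonpos hc (by linarith)))
  have sgn' : ∀ t : ℝ, t < 0 → (t - y₁) * (t - y₂) * (t - y₃) < 0 → 0 < (t - y₁) * (t - y₂) :=
    fun t ht h => by
      by_contra! hc
      exact absurd h (not_lt.mpr (mul_nonneg_of_nonpos_of_nonpos hc (by linarith)))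
  have m₁ := sgn' _ (neg_lt_zero.mpr huv) (by rw [e₁]; linarith)
  have m₂ := sgn _ (neg_lt_zero.mpr huw) (by rw [e₂]; exact n₂)
  have m₃ := sgn' _ (neg_lt_zero.mpr hvw) (by rw [e₃]; linarith)
  have hβ := AsymbR_critical p q s y₁ (by linarith) (by rw [hroots]; ring)
  have hγ := AsymbR_critical p q s y₃ h03.ne' (by rw [hroots]; ring)
  have k₁ : y₁ < -(s * (s + p + q)) := by
    by_contra! hc
    exact absurd m₂ (not_lt.mpr (mul_nonneg_of_nonpos_of_nonpos (by linarith) (by linarith)))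
  have k₂ : -(s * (s + p + q)) < y₂ := by
    by_contra! hc
    exact absurd m₂ (not_lt.mpr (mul_nonneg (by linarith) (by linarith)))
  have k₃ : -((s + p) * (s + p + q)) < y₁ := by
    by_contra! hc
    exact absurd m₃ (not_lt.mpr (mul_nonpos_of_nonneg_of_nonpos (by linarith) (by linarith)))
  have k₄ : y₂ < -(s * (s + p)) := by
    by_contra! hc
    exact absurd m₁ (not_lt.mpr (mul_nonpos_of_nonneg_of_nonpos (by linarith) (by linarith)))
  refine ⟨?_, ?_, ?_⟩
  · rw [AsymbR_eq_factored p q s y₂ h20.ne]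
    exact div_neg_of_neg_of_pos (mul_neg_of_neg_of_pos
      (mul_neg_of_neg_of_pos (by linarith) (by linarith)) (by linarith)) (sq_pos_of_neg h20)
  · rw [AsymbR_eq_factored p q s y₁ (by linarith)]
    exact div_pos (mul_pos
      (mul_pos_of_neg_of_neg (by linarith) (by linarith)) (by linarith)) (sq_pos_of_neg (by linarith))
  · rw [hβ, hγ]
    have hsq : y₁ ^ 2 < y₃ ^ 2 := by nlinarith
    have hdiv : dS p q s / y₃ ^ 2 < dS p q s / y₁ ^ 2 :=
      div_lt_div_of_pos_left hd (sq_pos_of_neg (by linarith)) hsq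
    linarith
end

section
/- Let p > 0, q > 0 and s > 0, and let x ∈ ℝ. The cubic Q_{s,x} has three distinct real roots if and only if x ∈ (η(s), β(s)) ∪ (γ(s), ∞); moreover, in that case the three real roots have pairwise distinct absolute values. -/
/-!
Write `Q` for the real cubic `z³ + (b - x) z² + c z + d`, with `c, d > 0`, and `g(z) = z³ - c z - 2 d`,
whose roots are `y₁ < y₂ < 0 < y₃`. Two identities drive the argument: `Q(y) = y² (A_s(y) - x)` for
`y ≠ 0`, so that the position of `x` relative to `β, η, γ` is the sign of `Q` at `y₁, y₂, y₃`; and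
`z Q'(z) - 2 Q(z) = g(z)`, so that at a root of `Q` the sign of `g` is that of `z Q'(z)`.

* If `Q` has roots `u < v < w`, then `u v w = -d < 0`. When all three roots are negative, the signs of
  `g` at the roots give `u < y₁ < v < y₂ < w < 0`, hence `Q(y₂) < 0 < Q(y₁)`. When `u < 0 < v < w`,
  they give `v < y₃ < w`, hence `Q(y₃) < 0`. This is `signs_of_roots`.
* Conversely, either pattern of signs produces two roots by the intermediate value theorem; the third
  one is then real by `cubic_factor`, and its position is read off from a sign
  (`roots_of_signs_neg`, `roots_of_signs_pos`).
* Two distinct real roots of equal absolute value would be `r` and `-r`, which forces `c = -r² ≤ 0`.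
-/

open Filter Topology Set

/-- Two distinct roots of a monic cubic determine its factorization: the third root is `-a - v - w`. -/
lemma cubic_factor {a c d v w : ℝ} (hvw : v < w)
    (hv : v ^ 3 + a * v ^ 2 + c * v + d = 0) (hw : w ^ 3 + a * w ^ 2 + c * w + d = 0) :
    c = (-a - v - w) * v + (-a - v - w) * w + v * w ∧ d = -((-a - v - w) * v * w) := by
  have hc : c = (-a - v - w) * v + (-a - v - w) * w + v * w := by
    have h0 : w - v ≠ 0 := sub_ne_zero.mpr hvw.ne'
    apply mul_left_cancel₀ h0
    linear_combination hw - hv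
  refine ⟨hc, ?_⟩
  linear_combination hv - v * hc

lemma exists_cubic_root {a c d l r : ℝ} (hlr : l < r)
    (h : (l ^ 3 + a * l ^ 2 + c * l + d < 0 ∧ 0 < r ^ 3 + a * r ^ 2 + c * r + d) ∨
      (0 < l ^ 3 + a * l ^ 2 + c * l + d ∧ r ^ 3 + a * r ^ 2 + c * r + d < 0)) :
    ∃ t, l < t ∧ t < r ∧ t ^ 3 + a * t ^ 2 + c * t + d = 0 := by
  have hcont : ContinuousOn (fun t : ℝ => t ^ 3 + a * t ^ 2 + c * t + d) (Set.Icc l r) := by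
    fun_prop
  rcases h with h | h
  · obtain ⟨t, ht, h0⟩ := intermediate_value_Ioo hlr.le hcont h
    exact ⟨t, ht.1, ht.2, h0⟩
  · obtain ⟨t, ht, h0⟩ := intermediate_value_Ioo' hlr.le hcont ⟨h.2, h.1⟩
    exact ⟨t, ht.1, ht.2, h0⟩

lemma roots_of_signs_neg {a c d y₁ y₂ : ℝ} (hd : 0 < d) (h12 : y₁ < y₂) (h20 : y₂ < 0)
    (h1 : 0 < y₁ ^ 3 + a * y₁ ^ 2 + c * y₁ + d) (h2 : y₂ ^ 3 + a * y₂ ^ 2 + c * y₂ + d < 0) :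
    ∃ u v w : ℝ, u < v ∧ v < w ∧
      a = -(u + v + w) ∧ c = u * v + u * w + v * w ∧ d = -(u * v * w) := by
  obtain ⟨v, hv1, hv2, hv⟩ := exists_cubic_root h12 (Or.inr ⟨h1, h2⟩)
  obtain ⟨w, hw1, hw2, hw⟩ := exists_cubic_root (a := a) (c := c) (d := d) h20
    (Or.inl ⟨h2, by simpa using hd⟩)
  have hvw : v < w := hv2.trans hw1
  obtain ⟨hc, hdr⟩ := cubic_factor hvw hv hw
  refine ⟨-a - v - w, v, w, ?_, hvw, by ring, hc, hdr⟩
  -- The value at `y₁` is positive and `y₁` lies left of `v` and `w`, so the third root is left of `y₁`.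
  have h3 : 0 < (y₁ - (-a - v - w)) * ((v - y₁) * (w - y₁)) := by
    have : y₁ ^ 3 + a * y₁ ^ 2 + c * y₁ + d
        = (y₁ - (-a - v - w)) * ((v - y₁) * (w - y₁)) := by
      linear_combination y₁ * hc + hdr
    linarith
  have h4 : 0 < (v - y₁) * (w - y₁) := mul_pos (by linarith) (by linarith)
  have h5 := pos_of_mul_pos_left h3 h4.le
  linarith

lemma roots_of_signs_pos {a c d y₃ : ℝ} (hc0 : 0 < c) (hd : 0 < d) (h03 : 0 < y₃)
    (h3 : y₃ ^ 3 + a * y₃ ^ 2 + c * y₃ + d < 0) :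
    ∃ u v w : ℝ, u < v ∧ v < w ∧
      a = -(u + v + w) ∧ c = u * v + u * w + v * w ∧ d = -(u * v * w) := by
  obtain ⟨v, hv1, hv2, hv⟩ := exists_cubic_root (a := a) (c := c) (d := d) h03
    (Or.inr ⟨by simpa using hd, h3⟩)
  -- Beyond `|a|` the terms `z³ + a z²` are nonnegative, and `c z + d > 0`.
  obtain ⟨w, hw1, -, hw⟩ := exists_cubic_root (a := a) (c := c) (d := d) (l := y₃)
    (r := |a| + y₃) (by
      rcases (abs_nonneg a).lt_or_eq with h | h
      · linarith
      · exfalso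
        have ha : a = 0 := abs_eq_zero.mp h.symm
        subst ha
        have : 0 < y₃ ^ 3 + 0 * y₃ ^ 2 + c * y₃ + d := by positivity
        linarith) (Or.inl ⟨h3, by
      have ha := abs_nonneg a
      have h1 : 0 ≤ (|a| + y₃ + a) * (|a| + y₃) ^ 2 :=
        mul_nonneg (by linarith [neg_abs_le a]) (sq_nonneg _)
      have h2 : 0 < c * (|a| + y₃) := mul_pos hc0 (by linarith)
      linarith⟩)
  have hvw : v < w := hv2.trans hw1
  obtain ⟨hc, hdr⟩ := cubic_factor hvw hv hw
  refine ⟨-a - v - w, v, w, ?_, hvw, by ring, hc, hdr⟩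
  have hvw0 : 0 < v * w := mul_pos hv1 (hv1.trans hvw)
  have : -a - v - w < 0 := by
    by_contra! h
    have := mul_nonneg h hvw0.le
    linarith
  linarith

/-- Roots `u < v < w` of the cubic interlace with the roots `yᵢ` of `g(z) = z³ - c z - 2 d`, because
`g(u) = u (u - v) (u - w)` and likewise at `v` and `w`. The conclusion records the resulting signs of
the cubic at the `yᵢ`. -/
lemma signs_of_roots {c d y₁ y₂ y₃ u v w : ℝ} (hd : 0 < d) (h12 : y₁ < y₂)
    (h20 : y₂ < 0) (h03 : 0 < y₃)
    (hg : ∀ z : ℝ, z ^ 3 - c * z - 2 * d = (z - y₁) * (z - y₂) * (z - y₃))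
    (huv : u < v) (hvw : v < w)
    (hcr : c = u * v + u * w + v * w) (hdr : d = -(u * v * w)) :
    ((y₂ - u) * (y₂ - v) * (y₂ - w) < 0 ∧ 0 < (y₁ - u) * (y₁ - v) * (y₁ - w)) ∨
      (y₃ - u) * (y₃ - v) * (y₃ - w) < 0 := by
  have gu : (u - y₁) * (u - y₂) * (u - y₃) = u * (u - v) * (u - w) := by
    rw [← hg u, hcr, hdr]; ring
  have gv : (v - y₁) * (v - y₂) * (v - y₃) = v * (v - u) * (v - w) := by
    rw [← hg v, hcr, hdr]; ring
  have gw : (w - y₁) * (w - y₂) * (w - y₃) = w * (w - u) * (w - v) := by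
    rw [← hg w, hcr, hdr]; ring
  have hprod : u * v * w < 0 := by linarith
  rcases lt_trichotomy v 0 with hv | hv | hv
  · left
    have hu : u < 0 := huv.trans hv
    have hw : w < 0 := by
      by_contra! h
      have := mul_nonneg (mul_pos_of_neg_of_neg hu hv).le h
      linarith
    have sv : 0 < v * (v - u) * (v - w) :=
      mul_pos_of_neg_of_neg (mul_neg_of_neg_of_pos hv (by linarith)) (by linarith)
    have sw : w * (w - u) * (w - v) < 0 :=
      mul_neg_of_neg_of_pos (mul_neg_of_neg_of_pos hw (by linarith)) (by linarith)
    have su : u * (u - v) * (u - w) < 0 :=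
      mul_neg_of_pos_of_neg (mul_pos_of_neg_of_neg hu (by linarith)) (by linarith)
    rw [← gu] at su
    rw [← gv] at sv
    rw [← gw] at sw
    have kv : (v - y₁) * (v - y₂) < 0 := by
      by_contra! h
      have := mul_nonneg h (show 0 ≤ y₃ - v by linarith)
      linarith
    have kw : 0 < (w - y₁) * (w - y₂) := by
      by_contra! h
      have := mul_nonneg (show 0 ≤ -((w - y₁) * (w - y₂)) by linarith)
        (show 0 ≤ y₃ - w by linarith)
      linarith
    have ku : 0 < (u - y₁) * (u - y₂) := by
      by_contra! h
      have := mul_nonneg (show 0 ≤ -((u - y₁) * (u - y₂)) by linarith)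
        (show 0 ≤ y₃ - u by linarith)
      linarith
    have v1 : y₁ < v := by
      by_contra! h
      have := mul_nonneg (show 0 ≤ y₁ - v by linarith) (show 0 ≤ y₂ - v by linarith)
      linarith
    have v2 : v < y₂ := by
      by_contra! h
      have := mul_nonneg (show 0 ≤ v - y₁ by linarith) (show 0 ≤ v - y₂ by linarith)
      linarith
    have w2 : y₂ < w := by
      by_contra! h
      have := mul_nonneg (show 0 ≤ w - y₁ by linarith) (show 0 ≤ y₂ - w by linarith)
      linarith
    have u1 : u < y₁ := by
      by_contra! h
      have := mul_nonneg (show 0 ≤ u - y₁ by linarith) (show 0 ≤ y₂ - u by linarith)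
      linarith
    exact ⟨mul_neg_of_pos_of_neg (mul_pos (by linarith) (by linarith)) (by linarith),
      mul_pos_of_neg_of_neg (mul_neg_of_pos_of_neg (by linarith) (by linarith)) (by linarith)⟩
  · simp [hv] at hprod
  · right
    have hw : 0 < w := hv.trans hvw
    have hu : u < 0 := by
      by_contra! h
      have := mul_nonneg (mul_nonneg h hv.le) hw.le
      linarith
    have sv : v * (v - u) * (v - w) < 0 :=
      mul_neg_of_pos_of_neg (mul_pos hv (by linarith)) (by linarith)
    have sw : 0 < w * (w - u) * (w - v) :=
      mul_pos (mul_pos hw (by linarith)) (by linarith)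
    rw [← gv] at sv
    rw [← gw] at sw
    have v3 : v < y₃ := by
      by_contra! h
      have := mul_nonneg (mul_nonneg (show 0 ≤ v - y₁ by linarith) (show 0 ≤ v - y₂ by linarith))
        (show 0 ≤ v - y₃ by linarith)
      linarith
    have w3 : y₃ < w := by
      by_contra! h
      have := mul_nonneg (mul_nonneg (show 0 ≤ w - y₁ by linarith) (show 0 ≤ w - y₂ by linarith))
        (show 0 ≤ y₃ - w by linarith)
      linarith
    exact mul_neg_of_pos_of_neg (mul_pos (by linarith) (by linarith)) (by linarith)

lemma sq_mul_AsymbR_sub (p q s x : ℝ) {y : ℝ} (hy : y ≠ 0) :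
    y ^ 3 + (bS p q s - x) * y ^ 2 + cS p q s * y + dS p q s
      = y ^ 2 * (AsymbR p q s y - x) := by
  unfold AsymbR
  field_simp
  ring

lemma Qcubic_factor_real {p q s x u v w : ℝ}
    (h : ∀ z : ℂ, Qcubic p q s (x : ℂ) z = (z - (u : ℂ)) * (z - (v : ℂ)) * (z - (w : ℂ))) (t : ℝ) :
    t ^ 3 + (bS p q s - x) * t ^ 2 + cS p q s * t + dS p q s = (t - u) * (t - v) * (t - w) := by
  have := h t
  unfold Qcubic at this
  exact_mod_cast this

/-- Vieta's formulas for the last two coefficients of `Q_{s,x}`. -/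
lemma Qcubic_vieta {p q s x u v w : ℝ}
    (h : ∀ z : ℂ, Qcubic p q s (x : ℂ) z = (z - (u : ℂ)) * (z - (v : ℂ)) * (z - (w : ℂ))) :
    cS p q s = u * v + u * w + v * w ∧ dS p q s = -(u * v * w) := by
  have h0 := Qcubic_factor_real h 0
  have h1 := Qcubic_factor_real h 1
  have h2 := Qcubic_factor_real h (-1)
  constructor <;> linarith

lemma abs_ne_of_vieta {c u v w : ℝ} (hc : 0 < c) (h : c = u * v + u * w + v * w) (huv : u ≠ v) :
    |u| ≠ |v| := by
  intro e
  rcases abs_eq_abs.mp e with e | e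
  · exact huv e
  · subst e
    nlinarith [sq_nonneg v]

/-- for real `x`, the cubic `Q_{s,x}` has three distinct real roots iff
`x ∈ (η(s), β(s)) ∪ (γ(s), ∞)`; in that case the three roots have pairwise distinct
absolute values. Here `β(s) = A_s(y₁(s))`, `η(s) = A_s(y₂(s))`, `γ(s) = A_s(y₃(s))`. -/
theorem three_distinct_real_roots_iff
    (p q s : ℝ) (hp : 0 < p) (hq : 0 < q) (hs : 0 < s)
    (y₁ y₂ y₃ : ℝ) (h12 : y₁ < y₂) (h20 : y₂ < 0) (h03 : 0 < y₃)
    (hroots : ∀ z : ℝ,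
      z ^ 3 - cS p q s * z - 2 * dS p q s = (z - y₁) * (z - y₂) * (z - y₃))
    (x : ℝ) :
    ((∃ u v w : ℝ, u < v ∧ v < w ∧
        ∀ z : ℂ, Qcubic p q s (x : ℂ) z = (z - (u : ℂ)) * (z - (v : ℂ)) * (z - (w : ℂ))) ↔
      x ∈ Set.Ioo (AsymbR p q s y₂) (AsymbR p q s y₁) ∪ Set.Ioi (AsymbR p q s y₃)) ∧
    (∀ u v w : ℝ, u < v → v < w →
      (∀ z : ℂ, Qcubic p q s (x : ℂ) z = (z - (u : ℂ)) * (z - (v : ℂ)) * (z - (w : ℂ))) →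
        |u| ≠ |v| ∧ |u| ≠ |w| ∧ |v| ≠ |w|) := by
  have hc : 0 < cS p q s := by unfold cS; positivity
  have hd : 0 < dS p q s := by unfold dS; positivity
  have hy1 : y₁ < 0 := h12.trans h20
  have e1 := sq_mul_AsymbR_sub p q s x hy1.ne
  have e2 := sq_mul_AsymbR_sub p q s x h20.ne
  have e3 := sq_mul_AsymbR_sub p q s x h03.ne'
  have p1 : 0 < y₁ ^ 2 := by have := hy1.ne; positivity
  have p2 : 0 < y₂ ^ 2 := by have := h20.ne; positivity
  have p3 : 0 < y₃ ^ 2 := by have := h03.ne'; positivity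
  refine ⟨⟨?_, ?_⟩, ?_⟩
  · rintro ⟨u, v, w, huv, hvw, h⟩
    obtain ⟨hcr, hdr⟩ := Qcubic_vieta h
    have hQ := Qcubic_factor_real h
    rcases signs_of_roots hd h12 h20 h03 hroots huv hvw hcr hdr with ⟨k2, k1⟩ | k3
    · left
      rw [← hQ, e2] at k2
      rw [← hQ, e1] at k1
      constructor
      · linarith [(pos_iff_neg_of_mul_neg k2).mp p2]
      · linarith [pos_of_mul_pos_right k1 p1.le]
    · right
      rw [← hQ, e3] at k3
      have := (pos_iff_neg_of_mul_neg k3).mp p3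
      rw [Set.mem_Ioi]
      linarith
  · intro hx
    have key : ∃ u v w : ℝ, u < v ∧ v < w ∧ bS p q s - x = -(u + v + w) ∧
        cS p q s = u * v + u * w + v * w ∧ dS p q s = -(u * v * w) := by
      rcases hx with ⟨hx2, hx1⟩ | hx3
      · refine roots_of_signs_neg hd h12 h20 ?_ ?_
        · rw [e1]
          exact mul_pos p1 (by linarith)
        · rw [e2]
          exact mul_neg_of_pos_of_neg p2 (by linarith)
      · rw [Set.mem_Ioi] at hx3
        refine roots_of_signs_pos hc hd h03 ?_
        rw [e3]
        exact mul_neg_of_pos_of_neg p3 (by linarith)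
    obtain ⟨u, v, w, huv, hvw, ha, hcr, hdr⟩ := key
    refine ⟨u, v, w, huv, hvw, fun z => ?_⟩
    have ha' : (bS p q s : ℂ) - x = -((u : ℂ) + v + w) := by exact_mod_cast ha
    unfold Qcubic
    rw [ha', hcr, hdr]
    push_cast
    ring
  · intro u v w huv hvw h
    have hcr := (Qcubic_vieta h).1
    exact ⟨abs_ne_of_vieta hc hcr huv.ne,
      abs_ne_of_vieta (w := v) hc (by linarith) (huv.trans hvw).ne,
      abs_ne_of_vieta (w := u) hc (by linarith) hvw.ne⟩
end

section
/- Let p > 0 and q > 0. The function γ(s) is positive and strictly increasing on (0, ∞), with γ(s) → p(p+q) as s → 0⁺ and γ(s) → ∞ as s → ∞. -/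
/-!
Put `a = s`, `b = s + p`, `c = s + p + q`. The coefficients of `A_s` are built from the elementary
symmetric functions of `a, b, c`, and
`A_s(z) = (z + bc) (1 + ab/z) (1 + ac/z)` (`AsymbR_eq`).
On `(0, ∞)` the point `y₃` is a minimum of `A_s`, because
`A_s(z) - A_s(y) = (z - y)² (z + d/y²) / z²` at a root `y` of the cubic (`AsymbR_crit_le`).
So `γ(s)` is the minimum of `A_s` over `z > 0`. Each `A_s(z)` increases strictly with `s`, hence so
does the minimum. The factorization gives `γ(s) > bc ≥ p (p + q)`, and `bc → ∞` as `s → ∞`, while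
testing the minimum at `z = √s` bounds `γ(s)` above by a quantity tending to `p (p + q)` as `s → 0⁺`.
-/

open Filter Topology Set

theorem AsymbR_eq (p q s : ℝ) {z : ℝ} (hz : 0 < z) :
    AsymbR p q s z = (z + (s + p) * (s + p + q)) * (1 + s * (s + p) / z)
      * (1 + s * (s + p + q) / z) := by
  unfold AsymbR bS cS dS
  field_simp
  ring

/-- A positive critical point of `A_s` is a global minimum of `A_s` on `(0, ∞)`. -/
theorem AsymbR_crit_le (p q s : ℝ) {y z : ℝ} (hy : 0 < y) (hz : 0 < z)
    (h : y ^ 3 - cS p q s * y - 2 * dS p q s = 0) :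
    AsymbR p q s y ≤ AsymbR p q s z := by
  have hd : 0 ≤ dS p q s := by unfold dS; positivity
  have key : AsymbR p q s z - AsymbR p q s y
      = (z - y) ^ 2 * (z + dS p q s / y ^ 2) / z ^ 2 := by
    -- Solving the critical equation for `c` leaves an identity of rational functions in `y, z, d`.
    have hc : cS p q s = y ^ 2 - 2 * dS p q s / y := by
      field_simp
      linarith
    unfold AsymbR
    rw [hc]
    field_simp
    ring
  have : 0 ≤ (z - y) ^ 2 * (z + dS p q s / y ^ 2) / z ^ 2 := by positivity
  linarith

theorem AsymbR_lt_of_lt {p q s t z : ℝ} (hp : 0 < p) (hq : 0 < q) (hs : 0 < s) (hst : s < t)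
    (hz : 0 < z) : AsymbR p q s z < AsymbR p q t z := by
  have ht : 0 < t := hs.trans hst
  rw [AsymbR_eq p q s hz, AsymbR_eq p q t hz]
  gcongr

theorem lt_AsymbR {p q s z : ℝ} (hp : 0 < p) (hq : 0 < q) (hs : 0 < s) (hz : 0 < z) :
    (s + p) * (s + p + q) < AsymbR p q s z := by
  rw [AsymbR_eq p q s hz]
  have h1 : 0 < s * (s + p) / z := by positivity
  have h2 : 0 < s * (s + p + q) / z := by positivity
  have h3 : 0 < (s + p) * (s + p + q) := by positivity
  calc (s + p) * (s + p + q) < z + (s + p) * (s + p + q) := by linarith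
    _ ≤ (z + (s + p) * (s + p + q)) * (1 + s * (s + p) / z) :=
        le_mul_of_one_le_right (by positivity) (by linarith)
    _ ≤ _ := le_mul_of_one_le_right (by positivity) (by linarith)

/-- The value of `A_s` at the test point `√s`, with `s / √s` simplified to `√s`. -/
theorem AsymbR_sqrt (p q : ℝ) {s : ℝ} (hs : 0 < s) :
    AsymbR p q s (√s) = (√s + (s + p) * (s + p + q)) * (1 + √s * (s + p))
      * (1 + √s * (s + p + q)) := by
  rw [AsymbR_eq p q s (Real.sqrt_pos.2 hs), mul_div_right_comm, mul_div_right_comm,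
    Real.div_sqrt]

/-- `γ(s) = A_s(y₃(s))` is positive and strictly increasing on `(0,∞)`,
with `γ(s) → p(p+q)` as `s → 0⁺` and `γ(s) → ∞` as `s → ∞`. -/
theorem gamma_positive_strictMono
    (p q : ℝ) (hp : 0 < p) (hq : 0 < q)
    (y₁ y₂ y₃ : ℝ → ℝ)
    (hy : ∀ s : ℝ, 0 < s → y₁ s < y₂ s ∧ y₂ s < 0 ∧ 0 < y₃ s ∧
      ∀ z : ℝ, z ^ 3 - cS p q s * z - 2 * dS p q s
        = (z - y₁ s) * (z - y₂ s) * (z - y₃ s)) :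
    (∀ s : ℝ, 0 < s → 0 < AsymbR p q s (y₃ s)) ∧
      StrictMonoOn (fun s => AsymbR p q s (y₃ s)) (Set.Ioi 0) ∧
      Tendsto (fun s => AsymbR p q s (y₃ s)) (𝓝[>] 0) (𝓝 (p * (p + q))) ∧
      Tendsto (fun s => AsymbR p q s (y₃ s)) atTop atTop := by
  have hpos : ∀ s : ℝ, 0 < s → 0 < y₃ s := fun s hs => (hy s hs).2.2.1
  have hcrit : ∀ s : ℝ, 0 < s → y₃ s ^ 3 - cS p q s * y₃ s - 2 * dS p q s = 0 := by
    intro s hs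
    rw [(hy s hs).2.2.2 (y₃ s), sub_self, mul_zero]
  have hlow : ∀ s : ℝ, 0 < s → (s + p) * (s + p + q) < AsymbR p q s (y₃ s) :=
    fun s hs => lt_AsymbR hp hq hs (hpos s hs)
  refine ⟨fun s hs => lt_trans (by positivity) (hlow s hs), ?_, ?_, ?_⟩
  · intro s hs t ht hst
    exact (AsymbR_crit_le p q s (hpos s hs) (hpos t ht) (hcrit s hs)).trans_lt
      (AsymbR_lt_of_lt hp hq hs hst (hpos t ht))
  · have hup : Tendsto (fun s : ℝ => (√s + (s + p) * (s + p + q)) * (1 + √s * (s + p))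
        * (1 + √s * (s + p + q))) (𝓝[>] 0) (𝓝 (p * (p + q))) := by
      have hc : Continuous (fun s : ℝ => (√s + (s + p) * (s + p + q)) * (1 + √s * (s + p))
        * (1 + √s * (s + p + q))) := by fun_prop
      simpa using (hc.tendsto 0).mono_left nhdsWithin_le_nhds
    refine tendsto_of_tendsto_of_tendsto_of_le_of_le' tendsto_const_nhds hup ?_ ?_
    · filter_upwards [self_mem_nhdsWithin] with s hs
      have hs : 0 < s := hs
      have h := hlow s hs
      nlinarith [mul_pos hs hp, mul_pos hs hq, mul_pos hs hs]
    · filter_upwards [self_mem_nhdsWithin] with s hs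
      rw [← AsymbR_sqrt p q hs]
      exact AsymbR_crit_le p q s (hpos s hs) (Real.sqrt_pos.2 hs) (hcrit s hs)
  -- For `s > 0` the lower bound `bc` exceeds `p * s`.
  · refine tendsto_atTop_mono' atTop ?_ (tendsto_id.const_mul_atTop hp)
    filter_upwards [eventually_gt_atTop 0] with s hs
    have h := hlow s hs
    simp only [id]
    nlinarith [mul_pos hs hp, mul_pos hs hq, mul_pos hs hs, mul_pos hp hq, mul_pos hp hp]
end

section
/- Let p > 0 and q > 0. The function β(s) is positive and strictly decreasing on (0, ∞), with β(s) → p(p+q) as s → 0⁺ and β(s) → 0 as s → ∞. -/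
/-!
Write `u₁ = s`, `u₂ = s + p`, `u₃ = s + p + q`. The coefficients of the symbol are
`b = e₂`, `c = e₁ e₃`, `d = e₃²` for the elementary symmetric functions of the `uᵢ`, so the
substitution `z = -e₃ / v` turns the symbol into `(v - u₁)(v - u₂)(v - u₃) / v`; with `v = t + s`
this is `t (p - t) (p + q - t) / (t + s)`. Sign changes of the cubic `z³ - c z - 2 d` show that
`y₁` corresponds to the critical point with `0 < t < p`, and `β(s)` is therefore the maximum of
`t (p - t) (p + q - t) / (t + s)` over `0 < t < p` (`beta_eq_max`). Each of these functions is
positive and strictly decreasing in `s`, hence so is their maximum. For the limits, the maximum is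
at most `p (p + q)` and at most `p² (p + q) / s`, while for small `s` it is at least the value at
`t = √s`.
-/

open Filter Topology Set

/-- `A_s(-e₃ / (t + s))`, where `e₃ = s (s + p) (s + p + q)`. -/
noncomputable def symbT (p q s t : ℝ) : ℝ := t * (p - t) * (p + q - t) / (t + s)

lemma asymbR_eq_symbT {p q s y : ℝ} (hp : 0 < p) (hq : 0 < q) (hs : 0 < s) (hy : y < 0) :
    AsymbR p q s y = symbT p q s (-(s * (s + p) * (s + p + q)) / y - s) := by
  have h1 : s + p ≠ 0 := by positivity
  have h2 : s + p + q ≠ 0 := by positivity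
  have h3 : y ≠ 0 := hy.ne
  unfold AsymbR symbT bS cS dS
  rw [sub_add_cancel]
  field_simp
  ring

/-- The smallest critical point `y₁` corresponds to a point `t ∈ (0, p)`, at which
`symbT p q s` attains its maximum over `(0, p)`. -/
lemma beta_eq_max {p q s a b c : ℝ} (hp : 0 < p) (hq : 0 < q) (hs : 0 < s)
    (hab : a < b) (hb : b < 0) (hc : 0 < c)
    (h : ∀ z : ℝ, z ^ 3 - cS p q s * z - 2 * dS p q s = (z - a) * (z - b) * (z - c)) :
    ∃ t, 0 < t ∧ t < p ∧ AsymbR p q s a = symbT p q s t ∧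
      ∀ t', 0 < t' → t' < p → symbT p q s t' ≤ symbT p q s t := by
  have ha : a < 0 := hab.trans hb
  -- The cubic is positive at `z = -u₁ u₃`, which corresponds to `v = u₂`.
  have hP2 : 0 < (-(s * (s + p + q)) - a) * (-(s * (s + p + q)) - b)
      * (-(s * (s + p + q)) - c) := by
    rw [← h]
    have : (-(s * (s + p + q))) ^ 3 - cS p q s * (-(s * (s + p + q))) - 2 * dS p q s
        = s ^ 2 * (s + p + q) ^ 2 * (p * q) := by
      unfold cS dS; ring
    rw [this]; positivity
  -- The cubic is negative at `z = -u₂ u₃`, which corresponds to `v = u₁`.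
  have hP1 : (-((s + p) * (s + p + q)) - a) * (-((s + p) * (s + p + q)) - b)
      * (-((s + p) * (s + p + q)) - c) < 0 := by
    rw [← h]
    have : (-((s + p) * (s + p + q))) ^ 3 - cS p q s * (-((s + p) * (s + p + q)))
        - 2 * dS p q s
        = -((s + p) ^ 2 * (s + p + q) ^ 2 * (p * (p + q))) := by
      unfold cS dS; ring
    rw [this, neg_lt_zero]; positivity
  have hu13 : 0 < s * (s + p + q) := by positivity
  have hu23 : 0 < (s + p) * (s + p + q) := by positivity
  have hlt : s * (s + p + q) < (s + p) * (s + p + q) := by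
    apply mul_lt_mul_of_pos_right <;> linarith
  have hP2' := neg_of_mul_pos_left hP2 (by linarith)
  have hP1' := pos_of_mul_neg_left hP1 (by linarith)
  have ha2 : a < -(s * (s + p + q)) := by
    by_contra! hcon
    nlinarith [mul_nonneg (sub_nonneg.2 hcon) (sub_nonneg.2 (hcon.trans hab.le))]
  have hb2 : -(s * (s + p + q)) < b := by
    by_contra! hcon
    nlinarith [mul_nonneg (sub_nonneg.2 ha2.le) (sub_nonneg.2 hcon)]
  have ha1 : -((s + p) * (s + p + q)) < a := by
    by_contra! hcon
    nlinarith [mul_nonneg (sub_nonneg.2 hcon) (show 0 ≤ b + (s + p) * (s + p + q) by linarith)]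
  obtain ⟨v, hv⟩ : ∃ v, v = -(s * (s + p) * (s + p + q)) / a := ⟨_, rfl⟩
  have hva : v * a = -(s * (s + p) * (s + p + q)) := by
    rw [hv, div_mul_cancel₀ _ ha.ne]
  have hvs : s < v := by
    rw [hv, lt_div_iff_of_neg ha]; nlinarith
  have hvp : v < s + p := by
    rw [hv, div_lt_iff_of_neg ha]; nlinarith
  have hv0 : 0 < v := hs.trans hvs
  -- The critical equation `z³ - c z - 2 d = 0`, expressed in the variable `v`.
  have hG : 2 * v ^ 3 - (3 * s + 2 * p + q) * v ^ 2 + s * (s + p) * (s + p + q) = 0 := by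
    have h0 := h a
    have hcd : cS p q s = -(v * a) * (3 * s + 2 * p + q) := by rw [hva]; unfold cS; ring
    have hdd : dS p q s = (v * a) ^ 2 := by rw [hva]; unfold dS; ring
    rw [hcd, hdd] at h0
    have he : s * (s + p) * (s + p + q) = -(v * a) := by rw [hva]; ring
    rw [he]
    have : a ^ 2 * (a + v * (3 * s + 2 * p + q) - 2 * v ^ 2) = 0 := by linear_combination h0
    have h1 := (mul_eq_zero.1 this).resolve_left (pow_ne_zero 2 ha.ne)
    linear_combination (-v) * h1
  refine ⟨v - s, by linarith, by linarith, ?_, ?_⟩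
  · rw [asymbR_eq_symbT hp hq hs ha, hv]
  intro t' ht0 htp
  obtain ⟨β, hβ⟩ : ∃ β, β = symbT p q s (v - s) := ⟨_, rfl⟩
  have hβv : β * v = (v - s) * (v - s - p) * (v - s - p - q) := by
    rw [hβ]; unfold symbT; rw [sub_add_cancel, div_mul_cancel₀ _ hv0.ne']; ring
  have hβ0 : 0 < β := by
    rw [hβ]; unfold symbT; rw [sub_add_cancel]
    have h1 : 0 < v - s := by linarith
    have h2 : 0 < p - (v - s) := by linarith
    have h3 : 0 < p + q - (v - s) := by linarith
    positivity
  -- `v` is a double root of `(x - u₁)(x - u₂)(x - u₃) - β x`.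
  have hfac : ∀ x, (x - s) * (x - s - p) * (x - s - p - q) - β * x
      = (x - v) ^ 2 * (x - (3 * s + 2 * p + q - 2 * v)) := by
    intro x
    have : v * ((x - s) * (x - s - p) * (x - s - p - q) - β * x
      - (x - v) ^ 2 * (x - (3 * s + 2 * p + q - 2 * v))) = 0 := by
      linear_combination (-x) * hβv + (x - v) * hG
    have := (mul_eq_zero.1 this).resolve_left hv0.ne'
    linarith
  -- Evaluating at `u₂` shows that the third root lies to the right of `u₂`.
  have hρ : s + p < 3 * s + 2 * p + q - 2 * v := by
    by_contra! hcon
    have h1 := hfac (s + p)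
    have h2 : 0 ≤ (s + p - v) ^ 2 * (s + p - (3 * s + 2 * p + q - 2 * v)) :=
      mul_nonneg (sq_nonneg _) (by linarith)
    have h3 : 0 < β * (s + p) := by positivity
    rw [← h1] at h2
    ring_nf at h2 h3
    linarith
  rw [← hβ]
  unfold symbT
  rw [div_le_iff₀ (by linarith)]
  have h1 := hfac (t' + s)
  have h2 : (t' + s - v) ^ 2 * (t' + s - (3 * s + 2 * p + q - 2 * v)) ≤ 0 :=
    mul_nonpos_of_nonneg_of_nonpos (sq_nonneg _) (by linarith)
  linarith

lemma symbT_pos {p q s t : ℝ} (hq : 0 < q) (hs : 0 < s) (ht : 0 < t) (htp : t < p) :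
    0 < symbT p q s t := by
  have h2 : 0 < p - t := by linarith
  have h3 : 0 < p + q - t := by linarith
  unfold symbT
  positivity

lemma symbT_anti {p q s s' t : ℝ} (hq : 0 < q) (hs : 0 < s) (hss : s < s') (ht : 0 < t)
    (htp : t < p) : symbT p q s' t < symbT p q s t := by
  have h2 : 0 < p - t := by linarith
  have h3 : 0 < p + q - t := by linarith
  unfold symbT
  apply div_lt_div_of_pos_left <;> first | positivity | linarith

lemma symbT_num_le {p q t : ℝ} (hq : 0 < q) (ht : 0 < t) (htp : t < p) :
    t * (p - t) * (p + q - t) ≤ t * (p * (p + q)) := by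
  rw [mul_assoc]
  apply mul_le_mul_of_nonneg_left _ ht.le
  apply mul_le_mul <;> linarith

/-- `β(s) = A_s(y₁(s))` is positive and strictly decreasing on `(0,∞)`,
with `β(s) → p(p+q)` as `s → 0⁺` and `β(s) → 0` as `s → ∞`. -/
theorem beta_positive_strictAnti
    (p q : ℝ) (hp : 0 < p) (hq : 0 < q)
    (y₁ y₂ y₃ : ℝ → ℝ)
    (hy : ∀ s : ℝ, 0 < s → y₁ s < y₂ s ∧ y₂ s < 0 ∧ 0 < y₃ s ∧
      ∀ z : ℝ, z ^ 3 - cS p q s * z - 2 * dS p q s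
        = (z - y₁ s) * (z - y₂ s) * (z - y₃ s)) :
    (∀ s : ℝ, 0 < s → 0 < AsymbR p q s (y₁ s)) ∧
      StrictAntiOn (fun s => AsymbR p q s (y₁ s)) (Set.Ioi 0) ∧
      Tendsto (fun s => AsymbR p q s (y₁ s)) (𝓝[>] 0) (𝓝 (p * (p + q))) ∧
      Tendsto (fun s => AsymbR p q s (y₁ s)) atTop (𝓝 0) := by
  have key : ∀ s, 0 < s → ∃ t, 0 < t ∧ t < p ∧ AsymbR p q s (y₁ s) = symbT p q s t ∧
      ∀ t', 0 < t' → t' < p → symbT p q s t' ≤ symbT p q s t := by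
    intro s hs
    obtain ⟨h1, h2, h3, h4⟩ := hy s hs
    exact beta_eq_max hp hq hs h1 h2 h3 h4
  have hpos : ∀ s : ℝ, 0 < s → 0 < AsymbR p q s (y₁ s) := by
    intro s hs
    obtain ⟨t, ht, htp, he, -⟩ := key s hs
    rw [he]
    exact symbT_pos hq hs ht htp
  refine ⟨hpos, ?_, ?_, ?_⟩
  · intro s hs s' hs' hss
    obtain ⟨t, ht, htp, he, hm⟩ := key s hs
    obtain ⟨t', ht', htp', he', -⟩ := key s' hs'
    simp only [he, he']
    exact (symbT_anti hq hs hss ht' htp').trans_le (hm t' ht' htp')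
  · have hlow : Tendsto (fun s : ℝ => (p - √s) * (p + q - √s) / (1 + √s)) (𝓝[>] 0)
        (𝓝 (p * (p + q))) := by
      have hc : ContinuousAt (fun s : ℝ => (p - √s) * (p + q - √s) / (1 + √s)) 0 := by
        apply ContinuousAt.div <;> first | fun_prop | simp
      have := hc.tendsto
      simp only [Real.sqrt_zero, sub_zero, add_zero, div_one] at this
      exact this.mono_left nhdsWithin_le_nhds
    refine tendsto_of_tendsto_of_tendsto_of_le_of_le' hlow tendsto_const_nhds ?_ ?_
    · have hev : ∀ᶠ s : ℝ in 𝓝[>] 0, s < p ^ 2 :=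
        nhdsWithin_le_nhds (Iio_mem_nhds (by positivity))
      filter_upwards [self_mem_nhdsWithin, hev] with s hs hsp
      have hs : 0 < s := hs
      obtain ⟨t, -, -, he, hm⟩ := key s hs
      have hr : 0 < √s := Real.sqrt_pos.2 hs
      rw [he]
      refine le_trans (le_of_eq ?_) (hm (√s) hr ((Real.sqrt_lt' hp).2 hsp))
      have hsq : √s + s = √s * (1 + √s) := by
        rw [mul_add, Real.mul_self_sqrt hs.le, mul_one]
      unfold symbT
      rw [hsq, mul_assoc, mul_div_mul_left _ _ hr.ne']
    · filter_upwards [self_mem_nhdsWithin] with s hs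
      have hs : 0 < s := hs
      obtain ⟨t, ht, htp, he, -⟩ := key s hs
      rw [he]
      unfold symbT
      rw [div_le_iff₀ (by positivity)]
      have h1 := symbT_num_le hq ht htp
      have h2 : 0 < p * (p + q) * s := by positivity
      linarith
  · have hup : Tendsto (fun s : ℝ => p * (p * (p + q)) / s) atTop (𝓝 0) :=
      tendsto_const_nhds.div_atTop tendsto_id
    refine tendsto_of_tendsto_of_tendsto_of_le_of_le' tendsto_const_nhds hup ?_ ?_
    · filter_upwards [eventually_gt_atTop 0] with s hs
      exact (hpos s hs).le
    · filter_upwards [eventually_gt_atTop 0] with s hs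
      obtain ⟨t, ht, htp, he, -⟩ := key s hs
      rw [he]
      unfold symbT
      have h1 := symbT_num_le hq ht htp
      have h2 : t * (p * (p + q)) ≤ p * (p * (p + q)) :=
        mul_le_mul_of_nonneg_right htp.le (by positivity)
      apply div_le_div₀ <;> first | positivity | linarith
end

section
/- Let p > 0 and q > 0. The function η(s) is negative and strictly increasing on (0, ∞), with η(s) → −q²/4 as s → 0⁺ and η(s) → 0 as s → ∞. -/
/-!
Put `u = s`, `v = s + p`, `w = s + p + q`. Then `b`, `c`, `d` are `e₂`, `e₁e₃`, `e₃²` in the elementary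
symmetric functions of `u, v, w`, so `A_s(y) = (y + uv)(y + uw)(y + vw) / y²`. With
`y = -uvw / (s + p + x)` this becomes `g(x, s) = x (x + p) (x - q) / (x + p + s)`, and `0 < x < q`
corresponds to `-uw < y < -uv`.

Evaluating the cubic `z³ - cz - 2d` at `-uw` and `-uv` gives `y₁ < -uw < y₂ < -uv`, and `y₂` minimises
`A_s` on `(y₁, 0)`. Hence `η(s) = min_{0 < x < q} g(x, s)` (`eta_isMin`). For fixed `x` in `(0, q)`
the function `g(x, ·)` is negative and strictly increasing, so the same is true of the minimum; and
both limits follow from elementary bounds on `g`, the one at `0⁺` because `g(x, 0) = x (x - q)` has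
minimum `-q²/4` at `x = q/2`.
-/

open Filter Topology Set

/-- The symbol `A_s` in the coordinate `x`, where `y = -s(s+p)(s+p+q) / (s+p+x)`. -/
noncomputable def gEta (p q x s : ℝ) : ℝ := x * (x + p) * (x - q) / (x + p + s)

lemma AsymbR_eq_gEta {p q s x : ℝ} (hp : 0 < p) (hq : 0 < q) (hs : 0 < s) (hx : 0 < x) :
    AsymbR p q s (-(s * (s + p) * (s + p + q)) / (s + p + x)) = gEta p q x s := by
  have h1 : s + p ≠ 0 := by positivity
  have h2 : s + p + q ≠ 0 := by positivity
  have h3 : s + p + x ≠ 0 := by positivity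
  have h4 : x + p + s ≠ 0 := by positivity
  unfold AsymbR gEta bS cS dS
  field_simp
  ring

/-- The middle root `y₂` minimises the symbol on `(y₁, 0)`: the difference `A_s(y) - A_s(y₂)` is
`(y - y₂)² (y + d / y₂²) / y²`, and `y₁ + d / y₂² = y₁ (y₂ - y₁) / (2 y₂) > 0` by Vieta. -/
lemma AsymbR_min {p q s a e f y : ℝ} (hae : a < e) (he : e < 0)
    (h : ∀ z : ℝ, z ^ 3 - cS p q s * z - 2 * dS p q s = (z - a) * (z - e) * (z - f))
    (hay : a < y) (hy : y < 0) : AsymbR p q s e ≤ AsymbR p q s y := by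
  have h0 := h 0
  have h1 := h 1
  have h2 := h (-1)
  have hf : f = -a - e := by linarith
  subst hf
  have hd : dS p q s = a * e * (-a - e) / 2 := by linarith
  have hc : cS p q s = a ^ 2 + a * e + e ^ 2 := by linarith
  have key : AsymbR p q s y - AsymbR p q s e
      = (y - e) ^ 2 * ((y - a) + a * (e - a) / (2 * e)) / y ^ 2 := by
    unfold AsymbR
    rw [hd, hc]
    have := he.ne
    have := hy.ne
    field_simp
    ring
  have h3 : 0 < a * (e - a) / (2 * e) :=
    div_pos_of_neg_of_neg (mul_neg_of_neg_of_pos (by linarith) (by linarith)) (by linarith)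
  have h4 : 0 ≤ (y - e) ^ 2 * ((y - a) + a * (e - a) / (2 * e)) / y ^ 2 := by
    have : 0 < y - a := by linarith
    positivity
  linarith

/-- The values of the cubic at `-uw` and `-uv` are `u²w²(v-u)(w-v) > 0` and `-u²v²(w-u)(w-v) < 0`,
which locates these points relative to the roots. -/
lemma roots_location {p q s a e f : ℝ} (hp : 0 < p) (hq : 0 < q) (hs : 0 < s)
    (hae : a < e) (hf : 0 < f)
    (h : ∀ z : ℝ, z ^ 3 - cS p q s * z - 2 * dS p q s = (z - a) * (z - e) * (z - f)) :
    a < -(s * (s + p + q)) ∧ -(s * (s + p + q)) < e ∧ e < -(s * (s + p)) := by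
  have h1 := h (-(s * (s + p + q)))
  have h2 := h (-(s * (s + p)))
  have e1 : (-(s * (s + p + q))) ^ 3 - cS p q s * (-(s * (s + p + q))) - 2 * dS p q s
      = s ^ 2 * (s + p + q) ^ 2 * (p * q) := by unfold cS dS; ring
  have e2 : (-(s * (s + p))) ^ 3 - cS p q s * (-(s * (s + p))) - 2 * dS p q s
      = -(s ^ 2 * (s + p) ^ 2 * ((p + q) * q)) := by unfold cS dS; ring
  rw [e1] at h1
  rw [e2] at h2
  have p1 : 0 < s ^ 2 * (s + p + q) ^ 2 * (p * q) := by positivity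
  have p2 : 0 < s ^ 2 * (s + p) ^ 2 * ((p + q) * q) := by positivity
  have hM : -(s * (s + p + q)) < -(s * (s + p)) := by nlinarith
  have hN : -(s * (s + p)) < 0 := by
    have : 0 < s * (s + p) := by positivity
    linarith
  generalize -(s * (s + p + q)) = m at *
  generalize -(s * (s + p)) = n at *
  have q1 : (m - a) * (m - e) < 0 := by
    by_contra! hc
    have := mul_nonpos_of_nonneg_of_nonpos hc (show m - f ≤ 0 by linarith)
    linarith
  have q2 : 0 < (n - a) * (n - e) := by
    by_contra! hc
    have := mul_nonneg_of_nonpos_of_nonpos hc (show n - f ≤ 0 by linarith)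
    linarith
  have r1 : a < m := by
    by_contra! hc
    have := mul_nonneg_of_nonpos_of_nonpos (show m - a ≤ 0 by linarith)
      (show m - e ≤ 0 by linarith)
    linarith
  refine ⟨r1, ?_, ?_⟩
  · by_contra! hc
    have := mul_nonneg (show 0 ≤ m - a by linarith) (show 0 ≤ m - e by linarith)
    linarith
  · by_contra! hc
    have := mul_nonpos_of_nonneg_of_nonpos (show 0 ≤ n - a by linarith)
      (show n - e ≤ 0 by linarith)
    linarith

/-- `η(s)` is the minimum of `g(x, s)` over `0 < x < q`. -/
lemma eta_isMin {p q s a e f : ℝ} (hp : 0 < p) (hq : 0 < q) (hs : 0 < s)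
    (hae : a < e) (he : e < 0) (hf : 0 < f)
    (h : ∀ z : ℝ, z ^ 3 - cS p q s * z - 2 * dS p q s = (z - a) * (z - e) * (z - f)) :
    (∃ x, 0 < x ∧ x < q ∧ AsymbR p q s e = gEta p q x s) ∧
      ∀ x, 0 < x → x < q → AsymbR p q s e ≤ gEta p q x s := by
  obtain ⟨l1, l2, l3⟩ := roots_location hp hq hs hae hf h
  have hsp : 0 < s + p := by positivity
  have hspq : 0 < s + p + q := by positivity
  constructor
  · have hx0 : 0 < s * (s + p) * (s + p + q) / (-e) - (s + p) := by
      rw [sub_pos, lt_div_iff₀ (by linarith)]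
      nlinarith
    refine ⟨s * (s + p) * (s + p + q) / (-e) - (s + p), hx0, ?_, ?_⟩
    · rw [sub_lt_iff_lt_add, div_lt_iff₀ (by linarith)]
      nlinarith
    · rw [← AsymbR_eq_gEta hp hq hs hx0]
      congr 1
      have := he.ne
      rw [add_sub_cancel]
      field_simp
  · intro x hx hxq
    rw [← AsymbR_eq_gEta hp hq hs hx]
    refine AsymbR_min hae he h (l1.trans ?_) ?_
    · rw [lt_div_iff₀ (by positivity)]
      have : 0 < s * (s + p + q) * x := by positivity
      nlinarith
    · exact div_neg_of_neg_of_pos (by rw [neg_lt_zero]; positivity) (by positivity)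

lemma gEta_num_neg {p q x : ℝ} (hp : 0 < p) (hx : 0 < x) (hxq : x < q) :
    x * (x + p) * (x - q) < 0 :=
  mul_neg_of_pos_of_neg (by positivity) (by linarith)

/-- `η(s) = A_s(y₂(s))` is negative and strictly increasing on `(0,∞)`,
with `η(s) → −q²/4` as `s → 0⁺` and `η(s) → 0` as `s → ∞`. -/
theorem eta_negative_strictMono
    (p q : ℝ) (hp : 0 < p) (hq : 0 < q)
    (y₁ y₂ y₃ : ℝ → ℝ)
    (hy : ∀ s : ℝ, 0 < s → y₁ s < y₂ s ∧ y₂ s < 0 ∧ 0 < y₃ s ∧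
      ∀ z : ℝ, z ^ 3 - cS p q s * z - 2 * dS p q s
        = (z - y₁ s) * (z - y₂ s) * (z - y₃ s)) :
    (∀ s : ℝ, 0 < s → AsymbR p q s (y₂ s) < 0) ∧
      StrictMonoOn (fun s => AsymbR p q s (y₂ s)) (Set.Ioi 0) ∧
      Tendsto (fun s => AsymbR p q s (y₂ s)) (𝓝[>] 0) (𝓝 (-(q ^ 2) / 4)) ∧
      Tendsto (fun s => AsymbR p q s (y₂ s)) atTop (𝓝 0) := by
  have hmin : ∀ s : ℝ, 0 < s → (∃ x, 0 < x ∧ x < q ∧ AsymbR p q s (y₂ s) = gEta p q x s) ∧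
      ∀ x, 0 < x → x < q → AsymbR p q s (y₂ s) ≤ gEta p q x s := fun s hs =>
    let ⟨h1, h2, h3, h4⟩ := hy s hs
    eta_isMin hp hq hs h1 h2 h3 h4
  have hneg : ∀ s : ℝ, 0 < s → AsymbR p q s (y₂ s) < 0 := by
    intro s hs
    obtain ⟨⟨x, hx, hxq, e⟩, -⟩ := hmin s hs
    rw [e]
    exact div_neg_of_neg_of_pos (gEta_num_neg hp hx hxq) (by positivity)
  refine ⟨hneg, ?_, ?_, ?_⟩
  · intro s hs t ht hst
    rw [Set.mem_Ioi] at hs ht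
    obtain ⟨⟨x, hx, hxq, e⟩, -⟩ := hmin t ht
    change AsymbR p q s (y₂ s) < AsymbR p q t (y₂ t)
    rw [e]
    refine ((hmin s hs).2 x hx hxq).trans_lt ?_
    have hn := gEta_num_neg hp hx hxq
    unfold gEta
    rw [div_lt_div_iff₀ (by positivity) (by positivity)]
    exact mul_lt_mul_of_neg_left (by linarith) hn
  -- Squeeze between `-q²/4` and `g(q/2, s)`.
  · have hup : Tendsto (fun s => gEta p q (q / 2) s) (𝓝[>] 0) (𝓝 (-(q ^ 2) / 4)) := by
      have hc : ContinuousAt (fun s => gEta p q (q / 2) s) 0 := by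
        unfold gEta
        refine ContinuousAt.div (by fun_prop) (by fun_prop) ?_
        positivity
      have h0 : gEta p q (q / 2) 0 = -(q ^ 2) / 4 := by
        have : q / 2 + p ≠ 0 := by positivity
        unfold gEta
        rw [add_zero, mul_right_comm, mul_div_cancel_right₀ _ this]
        ring
      rw [← h0]
      exact hc.tendsto.mono_left nhdsWithin_le_nhds
    refine tendsto_of_tendsto_of_tendsto_of_le_of_le' tendsto_const_nhds hup ?_ ?_
    · filter_upwards [self_mem_nhdsWithin] with s hs
      rw [Set.mem_Ioi] at hs
      obtain ⟨⟨x, hx, hxq, e⟩, -⟩ := hmin s hs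
      rw [e]
      unfold gEta
      rw [le_div_iff₀ (by positivity)]
      have h1 : 0 ≤ (x - q / 2) ^ 2 * (x + p) := by positivity
      have h2 : 0 ≤ q ^ 2 * s := by positivity
      nlinarith
    · filter_upwards [self_mem_nhdsWithin] with s hs
      exact (hmin s hs).2 (q / 2) (by positivity) (by linarith)
  -- Squeeze between `-q²(q+p)/s` and `0`.
  · have hlo : Tendsto (fun s : ℝ => -(q * (q + p) * q) / s) atTop (𝓝 0) :=
      tendsto_const_nhds.div_atTop tendsto_id
    refine tendsto_of_tendsto_of_tendsto_of_le_of_le' hlo tendsto_const_nhds ?_ ?_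
    · filter_upwards [eventually_gt_atTop 0] with s hs
      obtain ⟨⟨x, hx, hxq, e⟩, -⟩ := hmin s hs
      rw [e]
      unfold gEta
      rw [← neg_neg (x * (x + p) * (x - q)), neg_div, neg_div, neg_le_neg_iff, ← mul_neg, neg_sub]
      have : 0 ≤ q - x := by linarith
      gcongr <;> linarith
    · filter_upwards [eventually_gt_atTop 0] with s hs
      exact (hneg s hs).le
end

section
/- Let p > 0, q > 0 and s > 0. Then the two negative critical points of A_s satisfy −(s+p)(s+p+q) < y₁(s) < −s(s+p+q) < y₂(s) < −s(s+p); consequently, with ẑ_j(s) = s + s(s+p)(s+p+q)/y_j(s) for j = 1, 2, one has −(p+q) < ẑ₂(s) < −p and −p < ẑ₁(s) < 0. -/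
/-!
Write `a = s`, `b = s + p`, `c = s + p + q`, so `0 < a < b < c`, and the cubic becomes
`P(z) = z³ - abc(a + b + c) z - 2a²b²c²`. Its values at the three test points factor:
`P(-bc) = -b²c²(b - a)(c - a) < 0`, `P(-ac) = a²c²(b - a)(c - b) > 0` and
`P(-ab) = -a²b²(c - a)(c - b) < 0`. For `z < 0 < y₃` the sign of `P(z)` is opposite to that of
`(z - y₁)(z - y₂)`, so `y₁ < -ac < y₂` and the outer two points lie outside `[y₁, y₂]`.
The bounds on `s + abc / yⱼ` follow because `y ↦ abc / y` is decreasing on the negative axis.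
-/

open Filter Topology Set

/-- the two negative critical points of `A_s` satisfy
`−(s+p)(s+p+q) < y₁(s) < −s(s+p+q) < y₂(s) < −s(s+p)`; consequently, with
`ẑⱼ(s) = s + s(s+p)(s+p+q)/yⱼ(s)`, one has `−(p+q) < ẑ₂(s) < −p` and `−p < ẑ₁(s) < 0`. -/
theorem critical_points_location
    (p q s : ℝ) (hp : 0 < p) (hq : 0 < q) (hs : 0 < s)
    (y₁ y₂ y₃ : ℝ) (h12 : y₁ < y₂) (h20 : y₂ < 0) (h03 : 0 < y₃)
    (hroots : ∀ z : ℝ,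
      z ^ 3 - cS p q s * z - 2 * dS p q s = (z - y₁) * (z - y₂) * (z - y₃)) :
    (-((s + p) * (s + p + q)) < y₁ ∧ y₁ < -(s * (s + p + q)) ∧
      -(s * (s + p + q)) < y₂ ∧ y₂ < -(s * (s + p))) ∧
    (-(p + q) < s + s * (s + p) * (s + p + q) / y₂ ∧
      s + s * (s + p) * (s + p + q) / y₂ < -p) ∧
    (-p < s + s * (s + p) * (s + p + q) / y₁ ∧
      s + s * (s + p) * (s + p + q) / y₁ < 0) := by
  have hac : 0 < s * (s + p + q) := by positivity
  have hab : s * (s + p) < s * (s + p + q) := by nlinarith [mul_pos hs hq]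
  have hbc : s * (s + p + q) < (s + p) * (s + p + q) := by
    nlinarith [mul_pos hp (by positivity : 0 < s + p + q)]
  have hab0 : 0 < s * (s + p) := by positivity
  have e1 : (-((s + p) * (s + p + q)) - y₁) * (-((s + p) * (s + p + q)) - y₂) *
      (-((s + p) * (s + p + q)) - y₃) = -((s + p) ^ 2 * (s + p + q) ^ 2 * p * (p + q)) := by
    rw [← hroots, cS, dS]; ring
  have e2 : (-(s * (s + p + q)) - y₁) * (-(s * (s + p + q)) - y₂) *
      (-(s * (s + p + q)) - y₃) = s ^ 2 * (s + p + q) ^ 2 * p * q := by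
    rw [← hroots, cS, dS]; ring
  have e3 : (-(s * (s + p)) - y₁) * (-(s * (s + p)) - y₂) *
      (-(s * (s + p)) - y₃) = -(s ^ 2 * (s + p) ^ 2 * (p + q) * q) := by
    rw [← hroots, cS, dS]; ring
  have f1 : 0 < (-((s + p) * (s + p + q)) - y₁) * (-((s + p) * (s + p + q)) - y₂) := by
    refine pos_of_mul_neg_left (b := -((s + p) * (s + p + q)) - y₃) ?_ (by linarith)
    rw [e1]; exact neg_neg_of_pos (by positivity)
  have f2 : (-(s * (s + p + q)) - y₁) * (-(s * (s + p + q)) - y₂) < 0 := by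
    refine neg_of_mul_pos_left (b := -(s * (s + p + q)) - y₃) ?_ (by linarith)
    rw [e2]; positivity
  have f3 : 0 < (-(s * (s + p)) - y₁) * (-(s * (s + p)) - y₂) := by
    refine pos_of_mul_neg_left (b := -(s * (s + p)) - y₃) ?_ (by linarith)
    rw [e3]; exact neg_neg_of_pos (by positivity)
  obtain ⟨g1, g2⟩ : y₁ < -(s * (s + p + q)) ∧ -(s * (s + p + q)) < y₂ := by
    rcases mul_neg_iff.mp f2 with h | h
    · exact ⟨by linarith [h.1], by linarith [h.2]⟩
    · linarith [h.1, h.2]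
  have g0 : -((s + p) * (s + p + q)) < y₁ := by
    rcases mul_pos_iff.mp f1 with h | h
    · linarith [h.2]
    · linarith [h.1]
  have g3 : y₂ < -(s * (s + p)) := by
    rcases mul_pos_iff.mp f3 with h | h
    · linarith [h.2]
    · linarith [h.1]
  have h10 : y₁ < 0 := h12.trans h20
  have k1 : -(s + p + q) < s * (s + p) * (s + p + q) / y₂ := by
    rw [lt_div_iff_of_neg h20]
    linarith [mul_lt_mul_of_pos_right g3 (by positivity : 0 < s + p + q)]
  have k2 : s * (s + p) * (s + p + q) / y₂ < -(s + p) := by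
    rw [div_lt_iff_of_neg h20]
    linarith [mul_lt_mul_of_pos_right g2 (by positivity : 0 < s + p)]
  have k3 : -(s + p) < s * (s + p) * (s + p + q) / y₁ := by
    rw [lt_div_iff_of_neg h10]
    linarith [mul_lt_mul_of_pos_right g1 (by positivity : 0 < s + p)]
  have k4 : s * (s + p) * (s + p + q) / y₁ < -s := by
    rw [div_lt_iff_of_neg h10]
    linarith [mul_lt_mul_of_pos_right g0 hs]
  exact ⟨⟨g0, g1, g2, g3⟩, ⟨by linarith, by linarith⟩, ⟨by linarith, by linarith⟩⟩
end

section
/- Let p > 0 and q > 0. As s → 0⁺, the three real roots y₁(s) < y₂(s) < 0 < y₃(s) of z³ − c(s)z − 2d(s) satisfy: y₁(s)/√s → −√(p(p+q)(2p+q)), y₂(s)/s → −2p(p+q)/(2p+q), and y₃(s)/√s → √(p(p+q)(2p+q)). -/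
/-!
Put `t = √s`, `c(s) = t² C(s)` and `d(s) = t⁴ D(s)`, where `C` and `D` are continuous and positive
at `s = 0`. The rescaled roots `uᵢ = yᵢ / t` are the roots of `u³ - C u - 2 t D`, which degenerates
to `u³ - C(0) u` as `t → 0`. Vieta's formulas make this quantitative: `C ≤ u₃² ≤ C + 2 t D / √C`
and `-4 t D / C ≤ u₂ ≤ 0` (`rescaled_bounds`), so `u₃ → √C(0)` and `u₂ → 0` by squeezing, and
`u₁ = -u₂ - u₃ → -√C(0)`. The finer asymptotics of `y₂` follows from the product of the roots:
`y₂ / s = u₂ / t = 2 D / (u₁ u₃)`.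
-/

open Filter Topology Set

/-- Vieta's formulas for a monic cubic without quadratic term. -/
lemma vieta_depressed {c d a b e : ℝ}
    (h : ∀ z : ℝ, z ^ 3 - c * z - 2 * d = (z - a) * (z - b) * (z - e)) :
    a + b + e = 0 ∧ a * b + a * e + b * e = -c ∧ a * b * e = 2 * d := by
  have h0 := h 0
  have h1 := h 1
  have h2 := h (-1)
  refine ⟨?_, ?_, ?_⟩ <;> linarith

lemma rescaled_bounds {C D t u₁ u₂ u₃ : ℝ} (hC : 0 < C) (hD : 0 < D) (ht : 0 < t)
    (h12 : u₁ < u₂) (h2 : u₂ < 0) (h3 : 0 < u₃) (hsum : u₁ + u₂ + u₃ = 0)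
    (hpair : u₁ * u₂ + u₁ * u₃ + u₂ * u₃ = -C) (hprod : u₁ * u₂ * u₃ = 2 * (t * D)) :
    √C ≤ u₃ ∧ u₃ ≤ √(C + 2 * (t * D) / √C) ∧ -(4 * (t * D) / C) ≤ u₂ := by
  have htD : 0 < t * D := mul_pos ht hD
  obtain rfl : u₁ = -u₂ - u₃ := by linarith
  have hsq : u₃ ^ 2 = C + 2 * (t * D) / u₃ := by
    rw [← hprod]
    field_simp
    linarith
  have hge : C ≤ u₃ ^ 2 := by
    rw [hsq]
    have : 0 < 2 * (t * D) / u₃ := by positivity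
    linarith
  have hlow : √C ≤ u₃ := Real.sqrt_le_iff.mpr ⟨h3.le, hge⟩
  have hs : 0 < √C := Real.sqrt_pos.mpr hC
  refine ⟨hlow, Real.le_sqrt_of_sq_le ?_, ?_⟩
  · rw [hsq]
    gcongr
  · rw [neg_le, le_div_iff₀ hC]
    -- Since `u₁ < u₂ < 0`, we have `-u₁ ≥ u₃ / 2`, so `2 t D = u₁ u₂ u₃ ≥ -u₂ u₃² / 2 ≥ -u₂ C / 2`.
    have e1 : -u₂ * C ≤ -u₂ * u₃ ^ 2 := mul_le_mul_of_nonneg_left hge (by linarith)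
    have e2 : 0 ≤ -u₂ * u₃ * (u₃ + 2 * u₂) :=
      mul_nonneg (mul_nonneg (by linarith) h3.le) (by linarith)
    nlinarith [mul_nonneg (sq_nonneg u₂) h3.le]

/-- small-`s` asymptotics of the three real roots
`y₁(s) < y₂(s) < 0 < y₃(s)` of `z³ − c(s)z − 2d(s)`. -/
theorem critical_points_asymptotics_s_to_zero
    (p q : ℝ) (hp : 0 < p) (hq : 0 < q)
    (y₁ y₂ y₃ : ℝ → ℝ)
    (hy : ∀ s : ℝ, 0 < s → y₁ s < y₂ s ∧ y₂ s < 0 ∧ 0 < y₃ s ∧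
      ∀ z : ℝ, z ^ 3 - cS p q s * z - 2 * dS p q s
        = (z - y₁ s) * (z - y₂ s) * (z - y₃ s)) :
    Tendsto (fun s => y₁ s / Real.sqrt s) (𝓝[>] 0)
        (𝓝 (-Real.sqrt (p * (p + q) * (2 * p + q)))) ∧
      Tendsto (fun s => y₂ s / s) (𝓝[>] 0)
        (𝓝 (-(2 * p * (p + q)) / (2 * p + q))) ∧
      Tendsto (fun s => y₃ s / Real.sqrt s) (𝓝[>] 0)
        (𝓝 (Real.sqrt (p * (p + q) * (2 * p + q)))) := by
  set C : ℝ → ℝ := fun s => (s + p) * (s + p + q) * (3 * s + 2 * p + q) with hCdef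
  set D : ℝ → ℝ := fun s => (s + p) ^ 2 * (s + p + q) ^ 2 with hDdef
  have hC0 : C 0 = p * (p + q) * (2 * p + q) := by simp [hCdef]
  have hD0 : D 0 = (p * (p + q)) ^ 2 := by simp [hDdef, mul_pow]
  have hC0pos : 0 < C 0 := by rw [hC0]; positivity
  have hsqC0 : √(C 0) ≠ 0 := (Real.sqrt_pos.mpr hC0pos).ne'
  have key : ∀ s : ℝ, 0 < s →
      √(C s) ≤ y₃ s / √s ∧ y₃ s / √s ≤ √(C s + 2 * (√s * D s) / √(C s)) ∧
      -(4 * (√s * D s) / C s) ≤ y₂ s / √s ∧ y₂ s / √s ≤ 0 ∧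
      y₁ s / √s = -(y₂ s / √s) - y₃ s / √s ∧
      y₂ s / s = 2 * D s / ((y₁ s / √s) * (y₃ s / √s)) := by
    intro s hs
    obtain ⟨h12, h2, h3, hz⟩ := hy s hs
    obtain ⟨v1, v2, v3⟩ := vieta_depressed hz
    have ht : 0 < √s := Real.sqrt_pos.mpr hs
    have hts : √s ^ 2 = s := Real.sq_sqrt hs.le
    have hC : 0 < C s := by simp only [hCdef]; positivity
    have hD : 0 < D s := by simp only [hDdef]; positivity
    have hc : cS p q s = √s ^ 2 * C s := by rw [hts]; simp only [cS, hCdef]; ring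
    have hd : dS p q s = √s ^ 4 * D s := by
      rw [show √s ^ 4 = (√s ^ 2) ^ 2 by ring, hts]; simp only [dS, hDdef]; ring
    rw [hc] at v2
    rw [hd] at v3
    have w1 : y₁ s / √s + y₂ s / √s + y₃ s / √s = 0 := by
      rw [← add_div, ← add_div, v1, zero_div]
    have w2 : y₁ s / √s * (y₂ s / √s) + y₁ s / √s * (y₃ s / √s) + y₂ s / √s * (y₃ s / √s)
        = -C s := by
      field_simp
      linarith
    have w3 : y₁ s / √s * (y₂ s / √s) * (y₃ s / √s) = 2 * (√s * D s) := by
      field_simp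
      linarith
    obtain ⟨b1, b2, b3⟩ := rescaled_bounds hC hD ht (div_lt_div_of_pos_right h12 ht)
      (div_neg_of_neg_of_pos h2 ht) (div_pos h3 ht) w1 w2 w3
    refine ⟨b1, b2, b3, (div_neg_of_neg_of_pos h2 ht).le, by linarith, ?_⟩
    have n1 : y₁ s / √s ≠ 0 := (div_neg_of_neg_of_pos (h12.trans h2) ht).ne
    have n3 : y₃ s / √s ≠ 0 := (div_pos h3 ht).ne'
    rw [eq_div_iff (mul_ne_zero n1 n3)]
    have e : y₂ s / s = y₂ s / √s / √s := by rw [div_div, ← sq, hts]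
    rw [e, div_mul_eq_mul_div, div_eq_iff ht.ne']
    linarith
  have ev : ∀ᶠ s : ℝ in 𝓝[>] 0, 0 < s := self_mem_nhdsWithin
  have tC : Tendsto C (𝓝[>] 0) (𝓝 (C 0)) :=
    ((by fun_prop : Continuous C).tendsto 0).mono_left nhdsWithin_le_nhds
  have tD : Tendsto D (𝓝[>] 0) (𝓝 (D 0)) :=
    ((by fun_prop : Continuous D).tendsto 0).mono_left nhdsWithin_le_nhds
  have tt : Tendsto (fun s : ℝ => √s) (𝓝[>] 0) (𝓝 0) := by
    have := (Real.continuous_sqrt.tendsto 0).mono_left (nhdsWithin_le_nhds (s := Ioi (0 : ℝ)))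
    rwa [Real.sqrt_zero] at this
  have t3 : Tendsto (fun s => y₃ s / √s) (𝓝[>] 0) (𝓝 √(C 0)) := by
    refine tendsto_of_tendsto_of_tendsto_of_le_of_le' tC.sqrt ?_
      (ev.mono fun s hs => (key s hs).1) (ev.mono fun s hs => (key s hs).2.1)
    have := (tC.add (((tt.mul tD).const_mul 2).div tC.sqrt hsqC0)).sqrt
    simpa using this
  have t2 : Tendsto (fun s => y₂ s / √s) (𝓝[>] 0) (𝓝 0) := by
    refine tendsto_of_tendsto_of_tendsto_of_le_of_le' ?_ tendsto_const_nhds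
      (ev.mono fun s hs => (key s hs).2.2.1) (ev.mono fun s hs => (key s hs).2.2.2.1)
    have := (((tt.mul tD).const_mul 4).div tC hC0pos.ne').neg
    simpa using this
  have t1 : Tendsto (fun s => y₁ s / √s) (𝓝[>] 0) (𝓝 (-√(C 0))) := by
    have := t2.neg.sub t3
    rw [neg_zero, zero_sub] at this
    exact this.congr' (ev.mono fun s hs => (key s hs).2.2.2.2.1.symm)
  rw [← hC0]
  refine ⟨t1, ?_, t3⟩
  have h := (tD.const_mul 2).div (t1.mul t3) (mul_ne_zero (neg_ne_zero.mpr hsqC0) hsqC0)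
  have hval : 2 * D 0 / (-√(C 0) * √(C 0)) = -(2 * p * (p + q)) / (2 * p + q) := by
    rw [neg_mul, Real.mul_self_sqrt hC0pos.le, hC0, hD0]
    field_simp
  rw [hval] at h
  exact h.congr' (ev.mono fun s hs => (key s hs).2.2.2.2.2.symm)
end
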